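/- arXiv:2005.02045 — 5 statements merged into one kernel-verified Lean document; each statement's English description precedes it below -/
import Mathlib

section
/- Let X and Y be real Banach spaces and 1 < p < ∞. If X and Y both have the Daugavet property, then 𝒯^s(X ⊕_p Y) = 𝒯(X ⊕_p Y) = 𝒯^cc(X ⊕_p Y) = 2^{1/p}. -/
open Metric Set

noncomputable section

variable (X : Type*) [NormedAddCommGroup X] [NormedSpace ℝ X]

/-- A subset `U` of `X` is weakly open if it is open in the weak topology of `X`. -/
def IsWeaklyOpen (U : Set X) : Prop := IsOpen (toWeakSpace ℝ X '' U)

/-- The slice `S(B_X, f, α) = {x ∈ B_X : f x > 1 - α}` of the closed unit ball of `X`. -/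
def sliceSet (f : X →L[ℝ] ℝ) (α : ℝ) : Set X :=
  {y ∈ closedBall (0 : X) 1 | 1 - α < f y}

/-- `S` is a slice of the closed unit ball of `X`, i.e. `S = S(B_X, f, α)` for some norm-one
functional `f` and some `α > 0`. -/
def IsSlice (S : Set X) : Prop :=
  ∃ f : X →L[ℝ] ℝ, ‖f‖ = 1 ∧ ∃ α > (0 : ℝ), S = sliceSet X f α

/-- The Daugavet index of thickness `𝒯ˢ(X)`: the infimum of all `r > 0` such that some slice of
the closed unit ball is contained in a closed ball of radius `r` centered at a point of the unit
sphere. -/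
def Ts : ℝ :=
  sInf {r : ℝ | 0 < r ∧ ∃ x : X, ‖x‖ = 1 ∧ ∃ S : Set X, IsSlice X S ∧ S ⊆ closedBall x r}

/-- `W` is a nonempty relatively weakly open subset of the closed unit ball of `X`. -/
def IsRelWeakOpen (W : Set X) : Prop :=
  W.Nonempty ∧ ∃ U : Set X, IsWeaklyOpen X U ∧ W = closedBall (0 : X) 1 ∩ U

/-- The Daugavet index of thickness `𝒯(X)`: the infimum of all `r > 0` such that some nonempty
relatively weakly open subset of the closed unit ball is contained in a closed ball of radius `r`
centered at a point of the unit sphere. -/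
def Tw : ℝ :=
  sInf {r : ℝ | 0 < r ∧ ∃ x : X, ‖x‖ = 1 ∧ ∃ W : Set X, IsRelWeakOpen X W ∧
    W ⊆ closedBall x r}

/-- The convex combination `∑ i, l i • W i` of the sets `W i` (the set of all sums
`∑ i, l i • w i` with `w i ∈ W i`). -/
def comboSet {n : ℕ} (l : Fin n → ℝ) (W : Fin n → Set X) : Set X :=
  {z : X | ∃ w : Fin n → X, (∀ i, w i ∈ W i) ∧ z = ∑ i, l i • w i}

/-- The Daugavet index of thickness `𝒯ᶜᶜ(X)`: the infimum of all `r > 0` such that some convex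
combination of nonempty relatively weakly open subsets of the closed unit ball is contained in a
closed ball of radius `r` centered at a point of the unit sphere. -/
def Tcc : ℝ :=
  sInf {r : ℝ | 0 < r ∧ ∃ x : X, ‖x‖ = 1 ∧ ∃ (n : ℕ) (l : Fin n → ℝ) (W : Fin n → Set X),
    (∀ i, 0 ≤ l i) ∧ (∑ i, l i) = 1 ∧ (∀ i, IsRelWeakOpen X (W i)) ∧
    comboSet X l W ⊆ closedBall x r}

/-- `X` has the Daugavet property: for every `x` in the unit sphere, every `ε > 0` and every
slice `S` of the closed unit ball there exists `y ∈ S` with `‖x - y‖ ≥ 2 - ε`. -/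
def DaugavetProperty : Prop :=
  ∀ x : X, ‖x‖ = 1 → ∀ ε > (0 : ℝ), ∀ S : Set X, IsSlice X S → ∃ y ∈ S, 2 - ε ≤ ‖x - y‖

section Daugavet

variable {X} {E : Type*} [NormedAddCommGroup E] [InnerProductSpace ℝ E]

/-- If `x`, `u` lie in the unit ball and `‖x + u‖` is almost `2`, then the norm is almost additive
on nonnegative combinations of `x` and `u`. -/
lemma add_sub_le_norm_smul_add_smul {x u : X} (hx : ‖x‖ ≤ 1) (hu : ‖u‖ ≤ 1) {δ s t : ℝ}
    (hδ : 0 ≤ δ) (hs : 0 ≤ s) (ht : 0 ≤ t) (h : 2 - δ ≤ ‖x + u‖) :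
    s + t - (s + t) * δ ≤ ‖s • x + t • u‖ := by
  rcases le_total t s with hts | hst
  · have key : ‖s • (x + u)‖ ≤ ‖s • x + t • u‖ + ‖(s - t) • u‖ := by
      refine le_trans (le_of_eq ?_) (norm_add_le _ _)
      congr 1
      module
    rw [norm_smul, norm_smul, Real.norm_of_nonneg hs, Real.norm_of_nonneg (sub_nonneg.2 hts)] at key
    nlinarith [mul_le_mul_of_nonneg_left h hs, mul_le_mul_of_nonneg_left hu (sub_nonneg.2 hts),
      mul_nonneg ht hδ]
  · have key : ‖t • (x + u)‖ ≤ ‖s • x + t • u‖ + ‖(t - s) • x‖ := by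
      refine le_trans (le_of_eq ?_) (norm_add_le _ _)
      congr 1
      module
    rw [norm_smul, norm_smul, Real.norm_of_nonneg ht, Real.norm_of_nonneg (sub_nonneg.2 hst)] at key
    nlinarith [mul_le_mul_of_nonneg_left h ht, mul_le_mul_of_nonneg_left hx (sub_nonneg.2 hst),
      mul_nonneg hs hδ]

/-- In a space with the Daugavet property, every nonempty open half-ball contains points `u` along
which the norm is almost additive with respect to a given vector `e`. -/
lemma DaugavetProperty.exists_mem_halfspace [Nontrivial X] (hX : DaugavetProperty X)
    (g : X →L[ℝ] ℝ) {c : ℝ} {u₀ : X} (hu₀ : ‖u₀‖ ≤ 1) (hc : c < g u₀) (e : X) {t ε : ℝ}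
    (ht : 0 ≤ t) (hε : 0 < ε) :
    ∃ u : X, ‖u‖ ≤ 1 ∧ c < g u ∧ ‖e‖ + t - ε ≤ ‖e + t • u‖ := by
  obtain ⟨x, hx, hex⟩ : ∃ x : X, ‖x‖ = 1 ∧ e = ‖e‖ • x := by
    rcases eq_or_ne e 0 with rfl | he
    · obtain ⟨x, hx⟩ := exists_norm_eq X zero_le_one
      exact ⟨x, hx, by simp⟩
    · refine ⟨‖e‖⁻¹ • e, norm_smul_inv_norm he, ?_⟩
      rw [smul_inv_smul₀ (norm_ne_zero_iff.2 he)]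
  obtain ⟨S, hS, hSg⟩ : ∃ S : Set X, IsSlice X S ∧ ∀ u ∈ S, ‖u‖ ≤ 1 ∧ c < g u := by
    rcases eq_or_ne g 0 with rfl | hg
    · obtain ⟨f, hf, -⟩ := exists_dual_vector' ℝ (0 : X)
      exact ⟨_, ⟨f, hf, 1, one_pos, rfl⟩, fun u hu => ⟨by simpa using hu.1, by simpa using hc⟩⟩
    · have hg' : 0 < ‖g‖ := norm_pos_iff.2 hg
      have hcg : c < ‖g‖ := hc.trans_le <| (le_abs_self _).trans <|
        (g.le_opNorm u₀).trans (mul_le_of_le_one_right hg'.le hu₀)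
      refine ⟨_, ⟨‖g‖⁻¹ • g, norm_smul_inv_norm hg, 1 - c / ‖g‖,
        sub_pos.2 ((div_lt_one hg').2 hcg), rfl⟩, fun u hu => ⟨by simpa using hu.1, ?_⟩⟩
      have := hu.2
      rw [sub_sub_cancel, smul_apply, smul_eq_mul, inv_mul_eq_div,
        div_lt_div_iff_of_pos_right hg'] at this
      exact this
  have hpos : 0 < ‖e‖ + t + 1 := by positivity
  obtain ⟨u, huS, hu⟩ := hX (-x) (by rwa [norm_neg]) (ε / (‖e‖ + t + 1)) (by positivity) S hS
  obtain ⟨hu1, hgu⟩ := hSg u huS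
  refine ⟨u, hu1, hgu, ?_⟩
  rw [← neg_add', norm_neg] at hu
  have key := add_sub_le_norm_smul_add_smul hx.le hu1 (by positivity) (norm_nonneg e) ht hu
  rw [← hex] at key
  have : (‖e‖ + t) * (ε / (‖e‖ + t + 1)) ≤ ε := by
    rw [mul_div_assoc', div_le_iff₀ hpos]
    nlinarith
  linarith

/-- The points `k` that are limits of `F u`, with `u` in the unit ball chosen so that the norm is
almost additive along `u` with respect to any prescribed vector. -/
def additiveClusterSet (F : X →L[ℝ] E) : Set E :=
  {k | ∀ (e : X) (t ε : ℝ), 0 ≤ t → 0 < ε →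
    ∃ u : X, ‖u‖ ≤ 1 ∧ ‖F u - k‖ < ε ∧ ‖e‖ + t - ε ≤ ‖e + t • u‖}

lemma isClosed_additiveClusterSet (F : X →L[ℝ] E) : IsClosed (additiveClusterSet F) := by
  refine isClosed_of_closure_subset fun k hk e t ε ht hε => ?_
  obtain ⟨k', hk', hd⟩ := Metric.mem_closure_iff.1 hk (ε / 2) (half_pos hε)
  obtain ⟨u, hu, hF, hn⟩ := hk' e t (ε / 2) ht (half_pos hε)
  refine ⟨u, hu, ?_, by linarith⟩
  have := norm_sub_le_norm_sub_add_norm_sub (F u) k' k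
  rw [dist_comm, dist_eq_norm] at hd
  linarith

lemma convex_additiveClusterSet (F : X →L[ℝ] E) : Convex ℝ (additiveClusterSet F) := by
  intro k₁ hk₁ k₂ hk₂ a b ha hb hab e t ε ht hε
  obtain ⟨u₁, hu₁, hF₁, hn₁⟩ := hk₁ e (t * a) (ε / 2) (mul_nonneg ht ha) (half_pos hε)
  obtain ⟨u₂, hu₂, hF₂, hn₂⟩ :=
    hk₂ (e + (t * a) • u₁) (t * b) (ε / 2) (mul_nonneg ht hb) (half_pos hε)
  refine ⟨a • u₁ + b • u₂, ?_, ?_, ?_⟩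
  · have := convex_closedBall (0 : X) 1 (x := u₁) (by simpa) (y := u₂) (by simpa) ha hb hab
    simpa using this
  · have h1 : F (a • u₁ + b • u₂) - (a • k₁ + b • k₂) = a • (F u₁ - k₁) + b • (F u₂ - k₂) := by
      rw [map_add, map_smul, map_smul]
      module
    have h2 := norm_add_le (a • (F u₁ - k₁)) (b • (F u₂ - k₂))
    rw [norm_smul, norm_smul, Real.norm_of_nonneg ha, Real.norm_of_nonneg hb] at h2
    rw [h1]
    nlinarith [mul_le_mul_of_nonneg_left hF₁.le ha, mul_le_mul_of_nonneg_left hF₂.le hb]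
  · have h1 : e + t • (a • u₁ + b • u₂) = e + (t * a) • u₁ + (t * b) • u₂ := by module
    have h2 : t * a + t * b = t := by rw [← mul_add, hab, mul_one]
    rw [h1]
    linarith

/-- A point of the closure of `F '' B_X` at maximal distance from some `c` is strongly exposed by
`k - c`, so small slices of `B_X` are mapped by `F` close to `k`. -/
lemma DaugavetProperty.farthest_mem_additiveClusterSet [Nontrivial X] (hX : DaugavetProperty X)
    (F : X →L[ℝ] E) {c k : E} (hk : k ∈ closure (F '' closedBall 0 1))
    (hmax : ∀ u : X, ‖u‖ ≤ 1 → ‖F u - c‖ ≤ ‖k - c‖) : k ∈ additiveClusterSet F := by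
  intro e t ε ht hε
  obtain ⟨_, hw, ⟨u₀, hu₀, rfl⟩⟩ := mem_closure_iff.1 hk
    {z | inner ℝ (k - c) k - ε ^ 2 / 4 < inner ℝ (k - c) z}
    (isOpen_lt continuous_const (by fun_prop))
    (by simp only [mem_ofPred_eq]; linarith [pow_pos hε 2])
  obtain ⟨u, hu, hgu, hn⟩ := hX.exists_mem_halfspace ((innerSL ℝ (k - c)).comp F)
    (by simpa using hu₀) (c := inner ℝ (k - c) k - ε ^ 2 / 4) hw e ht hε
  refine ⟨u, hu, ?_, hn⟩
  have hgu' : inner ℝ (k - c) k - ε ^ 2 / 4 < inner ℝ (k - c) (F u) := hgu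
  have h1 := norm_sub_sq_real (F u - c) (k - c)
  rw [sub_sub_sub_cancel_right, real_inner_comm] at h1
  have h2 : inner ℝ (k - c) (F u - c) =
      inner ℝ (k - c) (F u) - inner ℝ (k - c) k + ‖k - c‖ ^ 2 := by
    rw [← real_inner_self_eq_norm_sq, inner_sub_right _ (F u), inner_sub_right _ k]
    ring
  have h3 : ‖F u - c‖ ^ 2 ≤ ‖k - c‖ ^ 2 := pow_le_pow_left₀ (norm_nonneg _) (hmax u hu) 2
  refine lt_of_pow_lt_pow_left₀ 2 hε.le ?_
  nlinarith [pow_pos hε 2]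

lemma DaugavetProperty.map_mem_additiveClusterSet [Nontrivial X] [FiniteDimensional ℝ E]
    (hX : DaugavetProperty X) (F : X →L[ℝ] E) {a : X} (ha : ‖a‖ ≤ 1) :
    F a ∈ additiveClusterSet F := by
  by_contra hFa
  obtain ⟨f, s, hs, hsa⟩ := geometric_hahn_banach_closed_point (convex_additiveClusterSet F)
    (isClosed_additiveClusterSet F) hFa
  obtain ⟨v, rfl⟩ := (InnerProductSpace.toDual ℝ E).surjective f
  simp only [InnerProductSpace.toDual_apply_apply] at hs hsa
  have hη : 0 < inner ℝ v (F a) - s := sub_pos.2 hsa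
  set η := inner ℝ v (F a) - s with hηdef
  set K := closure (F '' closedBall (0 : X) 1) with hK
  have hbdd : Bornology.IsBounded K :=
    (F.lipschitz.isBounded_image isBounded_closedBall).closure
  have hcomp : IsCompact K := Metric.isCompact_of_isClosed_isBounded isClosed_closure hbdd
  obtain ⟨D, hD⟩ := hbdd.subset_closedBall (F a)
  have hFaK : F a ∈ K := subset_closure ⟨a, by simpa using ha, rfl⟩
  set τ := (D ^ 2 + 1) / (2 * η) with hτ
  obtain ⟨k, hkK, hkmax⟩ := hcomp.exists_isMaxOn ⟨_, hFaK⟩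
    (f := fun z => ‖z - (F a - τ • v)‖) (by fun_prop)
  have hk : k ∈ additiveClusterSet F := hX.farthest_mem_additiveClusterSet F hkK
    fun u hu => hkmax (subset_closure ⟨u, by simpa using hu, rfl⟩)
  have hkD : ‖k - F a‖ ≤ D := by simpa [dist_eq_norm] using hD hkK
  have h1 : ‖F a - (F a - τ • v)‖ ≤ ‖k - (F a - τ • v)‖ := hkmax hFaK
  have h2 : k - (F a - τ • v) = (k - F a) + τ • v := by abel
  rw [sub_sub_cancel, h2] at h1
  have h3 := norm_add_sq_real (k - F a) (τ • v)
  rw [inner_smul_right, real_inner_comm, inner_sub_right] at h3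
  have h4 := pow_le_pow_left₀ (norm_nonneg _) h1 2
  have h5 := pow_le_pow_left₀ (norm_nonneg _) hkD 2
  have h6 : inner ℝ v k - inner ℝ v (F a) < -η := by linarith [hs k hk]
  have h7 : 2 * (τ * η) = D ^ 2 + 1 := by
    rw [hτ]
    field_simp
  have h8 : 0 < τ := by positivity
  nlinarith [mul_lt_mul_of_pos_left h6 h8]

/-- In a space with the Daugavet property, any point `a` of the ball of radius `r` can be replaced
by a point `u` of that ball, close to `a` with respect to finitely many functionals, along which
the norm is almost additive with respect to a given vector `e`. -/
lemma DaugavetProperty.exists_near [Nontrivial X] [FiniteDimensional ℝ E]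
    (hX : DaugavetProperty X) (F : X →L[ℝ] E) {a : X} {r : ℝ} (ha : ‖a‖ ≤ r) (e : X) {t ε : ℝ}
    (ht : 0 ≤ t) (hε : 0 < ε) :
    ∃ u : X, ‖u‖ ≤ r ∧ ‖F u - F a‖ < ε ∧ ‖e‖ + t * r - ε ≤ ‖e + t • u‖ := by
  have hr : 0 ≤ r := (norm_nonneg a).trans ha
  rcases hr.eq_or_lt with rfl | hr
  · exact ⟨a, ha, by simpa using hε, by
      rw [norm_le_zero_iff.1 ha]; simp [hε.le]⟩
  have ha' : ‖r⁻¹ • a‖ ≤ 1 := by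
    rw [norm_smul, norm_inv, Real.norm_of_nonneg hr.le, inv_mul_le_one₀ hr]
    exact ha
  obtain ⟨u, hu, hF, hn⟩ := hX.map_mem_additiveClusterSet F ha' e (t * r) (min ε (ε / r))
    (by positivity) (by positivity)
  refine ⟨r • u, ?_, ?_, ?_⟩
  · rw [norm_smul, Real.norm_of_nonneg hr.le]
    exact mul_le_of_le_one_right hr.le hu
  · have h1 : F (r • u) - F a = r • (F u - F (r⁻¹ • a)) := by
      rw [map_smul, map_smul, smul_sub, smul_inv_smul₀ hr.ne']
    rw [h1, norm_smul, Real.norm_of_nonneg hr.le, mul_comm, ← lt_div_iff₀ hr]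
    exact hF.trans_le (min_le_right _ _)
  · rw [smul_smul]
    linarith [min_le_left ε (ε / r)]

end Daugavet

section WeakTopology

variable {X}

/-- Weak neighbourhoods are determined by finitely many functionals. -/
lemma IsWeaklyOpen.exists_finite_functionals {U : Set X} (hU : IsWeaklyOpen X U) {a : X}
    (ha : a ∈ U) : ∃ (I : Finset (StrongDual ℝ X)) (F : X →L[ℝ] EuclideanSpace ℝ I),
      ∃ δ > 0, ∀ z, ‖F z - F a‖ < δ → z ∈ U := by
  obtain ⟨V, hV, hVU⟩ := isOpen_induced_iff.1 hU
  have hmem : ∀ z : X, (fun f : StrongDual ℝ X => f z) ∈ V ↔ z ∈ U := fun z => by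
    have h := Set.ext_iff.1 hVU (toWeakSpace ℝ X z)
    rw [(toWeakSpace ℝ X).injective.mem_set_image] at h
    exact h
  obtain ⟨I, u, hu, hIV⟩ := isOpen_pi_iff.1 hV _ ((hmem a).2 ha)
  let G : X →L[ℝ] (I → ℝ) := ContinuousLinearMap.pi fun f => (f : StrongDual ℝ X)
  let F : X →L[ℝ] EuclideanSpace ℝ I := (EuclideanSpace.equiv I ℝ).symm.toContinuousLinearMap.comp G
  have hO : IsOpen ((EuclideanSpace.equiv I ℝ) ⁻¹' (Set.univ.pi fun f : I => u f.1)) :=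
    (isOpen_set_pi Set.finite_univ fun (f : I) _ => (hu f.1 f.2).1).preimage
      (EuclideanSpace.equiv I ℝ).continuous
  obtain ⟨δ, hδ, hball⟩ := Metric.isOpen_iff.1 hO (F a) fun f _ => (hu f.1 f.2).2
  refine ⟨I, F, δ, hδ, fun z hz => (hmem z).1 (hIV fun f hf => ?_)⟩
  exact hball (by rwa [Metric.mem_ball, dist_eq_norm]) ⟨f, hf⟩ (Set.mem_univ _)

lemma IsSlice.isRelWeakOpen {S : Set X} (hS : IsSlice X S) : IsRelWeakOpen X S := by
  obtain ⟨f, hf, α, hα, rfl⟩ := hS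
  refine ⟨?_, {y | 1 - α < f y}, ?_, rfl⟩
  · obtain ⟨y, hy, hfy⟩ := f.exists_lt_apply_of_lt_opNorm (r := max 0 (1 - α)) (by
      rw [hf]; exact max_lt one_pos (by linarith))
    have h1 : 1 - α < |f y| := (le_max_right _ _).trans_lt hfy
    rcases le_total 0 (f y) with h | h
    · exact ⟨y, by simpa using hy.le, by rwa [abs_of_nonneg h] at h1⟩
    · exact ⟨-y, by simpa using hy.le, by rwa [abs_of_nonpos h, ← map_neg] at h1⟩
  · have hc : Continuous fun z : WeakSpace ℝ X => f ((toWeakSpace ℝ X).symm z) :=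
      WeakBilin.eval_continuous (topDualPairing ℝ X).flip f
    have h := isOpen_lt (continuous_const (y := 1 - α)) hc
    have himage := (toWeakSpace ℝ X).toEquiv.image_eq_preimage_symm {y | 1 - α < f y}
    exact (congrArg IsOpen himage).mpr h

end WeakTopology

section LpSum

lemma WithLp.prod_norm_rpow_eq_add {X Y : Type*} [NormedAddCommGroup X]
    [NormedAddCommGroup Y] {p : ENNReal} (hp : 0 < p.toReal) (z : WithLp p (X × Y)) :
    ‖z‖ ^ p.toReal = ‖z.fst‖ ^ p.toReal + ‖z.snd‖ ^ p.toReal := by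
  rw [WithLp.prod_norm_eq_add hp, one_div, Real.rpow_inv_rpow (by positivity) hp.ne']

lemma WithLp.two_rpow_mul_add_le_two_mul_prod_norm {X Y : Type*} [NormedAddCommGroup X]
    [NormedAddCommGroup Y] {p : ENNReal} [Fact (1 ≤ p)] (hp : 1 ≤ p.toReal)
    (z : WithLp p (X × Y)) :
    2 ^ (1 / p.toReal) * (‖z.fst‖ + ‖z.snd‖) ≤ 2 * ‖z‖ := by
  have hp0 : 0 < p.toReal := by linarith
  refine (Real.rpow_le_rpow_iff (by positivity) (by positivity) hp0).1 ?_
  rw [Real.mul_rpow (by positivity) (by positivity), Real.mul_rpow (by positivity) (by positivity),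
    one_div, Real.rpow_inv_rpow (by positivity) hp0.ne', WithLp.prod_norm_rpow_eq_add hp0]
  have h : (‖z.fst‖ + ‖z.snd‖) ^ p.toReal ≤
      2 ^ (p.toReal - 1) * (‖z.fst‖ ^ p.toReal + ‖z.snd‖ ^ p.toReal) := by
    exact_mod_cast NNReal.rpow_add_le_mul_rpow_add_rpow ‖z.fst‖₊ ‖z.snd‖₊ hp
  calc 2 * (‖z.fst‖ + ‖z.snd‖) ^ p.toReal
      ≤ 2 * (2 ^ (p.toReal - 1) * (‖z.fst‖ ^ p.toReal + ‖z.snd‖ ^ p.toReal)) := by gcongr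
    _ = 2 ^ p.toReal * (‖z.fst‖ ^ p.toReal + ‖z.snd‖ ^ p.toReal) := by
        rw [Real.rpow_sub_one two_ne_zero]
        ring

variable {X} {Y : Type*} [NormedAddCommGroup Y] [NormedSpace ℝ Y] {p : ENNReal} [Fact (1 ≤ p)]

lemma one_le_add_of_rpow_add_rpow_eq_one {a b q : ℝ} (ha : 0 ≤ a) (hb : 0 ≤ b) (hq : 1 ≤ q)
    (h : a ^ q + b ^ q = 1) : 1 ≤ a + b := by
  simpa [h] using Real.rpow_add_rpow_le_add ha hb hq

/-- Every nonempty relatively weakly open subset of the unit ball of `X ⊕_p Y` contains points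
along which the `ℓ₁`-sum of the norms of the coordinates is almost additive. -/
lemma IsRelWeakOpen.exists_mem_add_le [Nontrivial X] [Nontrivial Y] (hX : DaugavetProperty X)
    (hY : DaugavetProperty Y) (hp : 1 ≤ p.toReal) {W : Set (WithLp p (X × Y))}
    (hW : IsRelWeakOpen (WithLp p (X × Y)) W) (e : WithLp p (X × Y)) {t ε : ℝ} (ht : 0 ≤ t)
    (hε : 0 < ε) :
    ∃ w ∈ W, ‖e.fst‖ + ‖e.snd‖ + t - ε ≤ ‖(e + t • w).fst‖ + ‖(e + t • w).snd‖ := by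
  have hp0 : 0 < p.toReal := by linarith
  obtain ⟨⟨w₀, hw₀⟩, U, hU, rfl⟩ := hW
  obtain ⟨I, F, δ, hδ, hF⟩ := hU.exists_finite_functionals hw₀.2
  let J := (WithLp.prodContinuousLinearEquiv p ℝ X Y).symm.toContinuousLinearMap
  let F₁ := F.comp (J.comp (ContinuousLinearMap.inl ℝ X Y))
  let F₂ := F.comp (J.comp (ContinuousLinearMap.inr ℝ X Y))
  have hFadd : ∀ z, F z = F₁ z.fst + F₂ z.snd := fun z => by
    change F z = F (WithLp.toLp p (z.fst, 0)) + F (WithLp.toLp p (0, z.snd))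
    rw [← map_add, ← WithLp.toLp_add, Prod.mk_add_mk, add_zero, zero_add]
    rfl
  have hball : ‖w₀.fst‖ ^ p.toReal + ‖w₀.snd‖ ^ p.toReal ≤ 1 := by
    rw [← WithLp.prod_norm_rpow_eq_add hp0]
    exact Real.rpow_le_one (norm_nonneg _) (by simpa using hw₀.1) hp0.le
  have hsub : 0 ≤ 1 - ‖w₀.snd‖ ^ p.toReal := by
    linarith [Real.rpow_nonneg (norm_nonneg w₀.fst) p.toReal]
  set r := (1 - ‖w₀.snd‖ ^ p.toReal) ^ (p.toReal)⁻¹ with hr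
  have hr0 : 0 ≤ r := Real.rpow_nonneg hsub _
  have hrp : r ^ p.toReal + ‖w₀.snd‖ ^ p.toReal = 1 := by
    rw [hr, Real.rpow_inv_rpow hsub hp0.ne']
    ring
  have hfst : ‖w₀.fst‖ ≤ r :=
    (Real.rpow_le_rpow_iff (norm_nonneg _) hr0 hp0).1 (by linarith)
  have hε' : 0 < min (ε / 2) (δ / 2) := by positivity
  obtain ⟨u, hu, hFu, hnu⟩ := hX.exists_near F₁ hfst e.fst ht hε'
  obtain ⟨v, hv, hFv, hnv⟩ := hY.exists_near F₂ le_rfl e.snd ht hε'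
  refine ⟨WithLp.toLp p (u, v), ⟨?_, hF _ ?_⟩, ?_⟩
  · rw [mem_closedBall_zero_iff, ← Real.rpow_le_rpow_iff (norm_nonneg _) zero_le_one hp0,
      Real.one_rpow, WithLp.prod_norm_rpow_eq_add hp0, ← hrp]
    exact add_le_add (Real.rpow_le_rpow (norm_nonneg _) hu hp0.le)
      (Real.rpow_le_rpow (norm_nonneg _) hv hp0.le)
  · rw [hFadd, hFadd w₀, add_sub_add_comm]
    have := norm_add_le (F₁ u - F₁ w₀.fst) (F₂ v - F₂ w₀.snd)
    exact this.trans_lt (by linarith [min_le_right (ε / 2) (δ / 2)])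
  · have hadd := one_le_add_of_rpow_add_rpow_eq_one hr0 (norm_nonneg w₀.snd) hp hrp
    have := mul_le_mul_of_nonneg_left hadd ht
    change _ ≤ ‖e.fst + t • u‖ + ‖e.snd + t • v‖
    linarith [min_le_left (ε / 2) (δ / 2)]

lemma exists_sum_smul_add_le [Nontrivial X] [Nontrivial Y] (hX : DaugavetProperty X)
    (hY : DaugavetProperty Y) (hp : 1 ≤ p.toReal) {n : ℕ} (l : Fin n → ℝ)
    (W : Fin n → Set (WithLp p (X × Y))) (hl : ∀ i, 0 ≤ l i)
    (hW : ∀ i, IsRelWeakOpen (WithLp p (X × Y)) (W i)) (e : WithLp p (X × Y)) {ε : ℝ}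
    (hε : 0 < ε) :
    ∃ w : Fin n → WithLp p (X × Y), (∀ i, w i ∈ W i) ∧
      ‖e.fst‖ + ‖e.snd‖ + ∑ i, l i - ε ≤
        ‖(e + ∑ i, l i • w i).fst‖ + ‖(e + ∑ i, l i • w i).snd‖ := by
  induction n generalizing e ε with
  | zero => exact ⟨Fin.elim0, fun i => i.elim0, by simp [hε.le]⟩
  | succ n ih =>
    obtain ⟨w₀, hw₀, h₀⟩ := (hW 0).exists_mem_add_le hX hY hp e (hl 0) (half_pos hε)
    obtain ⟨w, hw, h⟩ := ih (fun i => l i.succ) (fun i => W i.succ) (fun i => hl _)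
      (fun i => hW _) (e + l 0 • w₀) (half_pos hε)
    refine ⟨Fin.cons w₀ w, Fin.cases hw₀ hw, ?_⟩
    rw [Fin.sum_univ_succ, Fin.sum_univ_succ]
    simp only [Fin.cons_zero, Fin.cons_succ, ← add_assoc]
    linarith

lemma two_rpow_le_of_comboSet_subset [Nontrivial X] [Nontrivial Y] (hX : DaugavetProperty X)
    (hY : DaugavetProperty Y) (hp : 1 ≤ p.toReal) {z : WithLp p (X × Y)} (hz : ‖z‖ = 1) {n : ℕ}
    {l : Fin n → ℝ} {W : Fin n → Set (WithLp p (X × Y))} (hl : ∀ i, 0 ≤ l i) (hl1 : ∑ i, l i = 1)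
    (hW : ∀ i, IsRelWeakOpen (WithLp p (X × Y)) (W i)) {r : ℝ}
    (hr : comboSet (WithLp p (X × Y)) l W ⊆ closedBall z r) : (2 : ℝ) ^ (1 / p.toReal) ≤ r := by
  have hp0 : 0 < p.toReal := by linarith
  have hz1 : 1 ≤ ‖z.fst‖ + ‖z.snd‖ := by
    refine one_le_add_of_rpow_add_rpow_eq_one (norm_nonneg _) (norm_nonneg _) hp ?_
    rw [← WithLp.prod_norm_rpow_eq_add hp0, hz, Real.one_rpow]
  have hpow : (0 : ℝ) < 2 ^ (1 / p.toReal) := by positivity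
  refine le_of_forall_pos_le_add fun ε hε => ?_
  obtain ⟨w, hw, h⟩ := exists_sum_smul_add_le hX hY hp l W hl hW (-z)
    (ε := 2 * ε / 2 ^ (1 / p.toReal)) (by positivity)
  have hdist : ‖-z + ∑ i, l i • w i‖ ≤ r := by
    rw [neg_add_eq_sub, ← dist_eq_norm]
    exact hr ⟨w, hw, rfl⟩
  rw [WithLp.neg_fst, WithLp.neg_snd, norm_neg, norm_neg, hl1] at h
  have h1 := WithLp.two_rpow_mul_add_le_two_mul_prod_norm hp (-z + ∑ i, l i • w i)
  have h2 : 2 - 2 * ε / 2 ^ (1 / p.toReal) ≤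
    ‖(-z + ∑ i, l i • w i).fst‖ + ‖(-z + ∑ i, l i • w i).snd‖ := by linarith
  have h3 := mul_le_mul_of_nonneg_left h2 hpow.le
  rw [mul_sub, mul_div_cancel₀ _ hpow.ne'] at h3
  linarith

/-- Slices defined by functionals vanishing on `Y` are almost contained in balls of radius
`2 ^ (1 / p)` centered at points of the unit sphere of `Y`. -/
lemma exists_slice_subset_closedBall [Nontrivial X] [Nontrivial Y] (hp : 1 ≤ p.toReal) {r : ℝ}
    (hr : (2 : ℝ) ^ (1 / p.toReal) < r) :
    ∃ z : WithLp p (X × Y), ‖z‖ = 1 ∧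
      ∃ S, IsSlice (WithLp p (X × Y)) S ∧ S ⊆ closedBall z r := by
  have hp0 : 0 < p.toReal := by linarith
  obtain ⟨y, hy⟩ := exists_norm_eq Y zero_le_one
  obtain ⟨f, hf, -⟩ := exists_dual_vector' ℝ (0 : X)
  have hη : 0 < r - 2 ^ (1 / p.toReal) := sub_pos.2 hr
  set η := min (r - 2 ^ (1 / p.toReal)) 1 with hηdef
  have hη0 : 0 < η := by positivity
  have hηp : 0 < η ^ p.toReal := by positivity
  have hηp1 : 0 ≤ 1 - η ^ p.toReal :=
    sub_nonneg.2 (Real.rpow_le_one hη0.le (min_le_right _ _) hp0.le)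
  set s := (1 - η ^ p.toReal) ^ (p.toReal)⁻¹ with hs
  have hs0 : 0 ≤ s := Real.rpow_nonneg hηp1 _
  have hs1 : s < 1 := Real.rpow_lt_one hηp1 (by linarith) (by positivity)
  have hsp : s ^ p.toReal = 1 - η ^ p.toReal := Real.rpow_inv_rpow hηp1 hp0.ne'
  have hle : ∀ x : X, f x ≤ ‖x‖ := fun x => by
    simpa [hf] using (le_abs_self _).trans (f.le_opNorm x)
  have hg : ‖f.comp (WithLp.fstL p ℝ X Y)‖ = 1 := by
    refine le_antisymm (ContinuousLinearMap.opNorm_le_bound _ zero_le_one fun z => ?_) ?_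
    · rw [one_mul]
      calc ‖f z.fst‖ ≤ ‖z.fst‖ := by simpa [hf] using f.le_opNorm z.fst
        _ ≤ ‖z‖ := WithLp.norm_fst_le ..
    · rw [← hf]
      refine f.opNorm_le_bound (norm_nonneg _) fun x => ?_
      simpa using (f.comp (WithLp.fstL p ℝ X Y)).le_opNorm (WithLp.toLp p (x, 0))
  refine ⟨WithLp.toLp p (0, y), by simpa using hy, _,
    ⟨_, hg, 1 - s, by linarith, rfl⟩, fun z hz => ?_⟩
  have hz1 : ‖z‖ ≤ 1 := by simpa using hz.1
  have hsz : s < ‖z.fst‖ := by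
    have := hz.2
    rw [sub_sub_cancel] at this
    exact this.trans_le (hle z.fst)
  have hzp : ‖z.fst‖ ^ p.toReal + ‖z.snd‖ ^ p.toReal ≤ 1 := by
    rw [← WithLp.prod_norm_rpow_eq_add hp0]
    exact Real.rpow_le_one (norm_nonneg _) hz1 hp0.le
  have hsnd : ‖z.snd‖ ≤ η := by
    refine (Real.rpow_le_rpow_iff (norm_nonneg _) hη0.le hp0).1 ?_
    linarith [Real.rpow_lt_rpow hs0 hsz hp0]
  have hsplit : z - WithLp.toLp p (0, y) =
      WithLp.toLp p (z.fst, -y) + WithLp.toLp p (0, z.snd) := by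
    rw [← WithLp.toLp_add, Prod.mk_add_mk, add_zero, neg_add_eq_sub]
    conv_rhs => rw [← sub_zero z.fst]
    rfl
  have hfirst : ‖WithLp.toLp p (z.fst, -y)‖ ≤ 2 ^ (1 / p.toReal) := by
    rw [WithLp.prod_norm_eq_add hp0]
    refine Real.rpow_le_rpow (by positivity) ?_ (by positivity)
    have : ‖z.fst‖ ^ p.toReal ≤ 1 :=
      Real.rpow_le_one (norm_nonneg _) ((WithLp.norm_fst_le ..).trans hz1) hp0.le
    simp only [WithLp.toLp_fst, WithLp.toLp_snd, norm_neg, hy, Real.one_rpow]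
    linarith
  have hsecond : ‖WithLp.toLp p ((0 : X), z.snd)‖ ≤ r - 2 ^ (1 / p.toReal) := by
    rw [WithLp.norm_toLp_snd]
    exact hsnd.trans (min_le_left _ _)
  rw [mem_closedBall, dist_eq_norm, hsplit]
  linarith [norm_add_le (WithLp.toLp p (z.fst, -y)) (WithLp.toLp p ((0 : X), z.snd))]

end LpSum

lemma csInf_eq_of_forall_gt_mem {S : Set ℝ} {m : ℝ} (hm : ∀ r ∈ S, m ≤ r) (hS : ∀ r > m, r ∈ S) :
    sInf S = m :=
  csInf_eq_of_forall_ge_of_forall_gt_exists_lt ⟨m + 1, hS _ (by linarith)⟩ hm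
    fun w hw => ⟨(m + w) / 2, hS _ (by linarith), by linarith⟩

theorem stmt_8 (X Y : Type*) [NormedAddCommGroup X] [NormedSpace ℝ X]
    [CompleteSpace X] [Nontrivial X] [NormedAddCommGroup Y] [NormedSpace ℝ Y]
    [CompleteSpace Y] [Nontrivial Y]
    (p : ENNReal) [Fact (1 ≤ p)] (hp : 1 < p) (hp' : p ≠ ⊤)
    (hX : DaugavetProperty X) (hY : DaugavetProperty Y) :
    Ts (WithLp p (X × Y)) = (2 : ℝ) ^ (1 / p.toReal) ∧
      Tw (WithLp p (X × Y)) = (2 : ℝ) ^ (1 / p.toReal) ∧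
      Tcc (WithLp p (X × Y)) = (2 : ℝ) ^ (1 / p.toReal) := by
  have hq : 1 ≤ p.toReal := by
    simpa using ENNReal.toReal_mono hp' hp.le
  have hpos : (0 : ℝ) < 2 ^ (1 / p.toReal) := by positivity
  have hcombo : ∀ W : Set (WithLp p (X × Y)),
      comboSet (WithLp p (X × Y)) (fun _ : Fin 1 => 1) (fun _ => W) = W := fun W => by
    ext z
    constructor
    · rintro ⟨w, hw, rfl⟩
      simpa using hw 0
    · exact fun hz => ⟨fun _ => z, fun _ => hz, by simp⟩
  have hweak : ∀ {z : WithLp p (X × Y)} {W : Set (WithLp p (X × Y))} {r : ℝ}, ‖z‖ = 1 →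
      IsRelWeakOpen (WithLp p (X × Y)) W → W ⊆ closedBall z r → (2 : ℝ) ^ (1 / p.toReal) ≤ r :=
    fun {z W r} hz hW hsub => two_rpow_le_of_comboSet_subset hX hY hq hz
      (l := fun _ : Fin 1 => 1) (W := fun _ => W) (fun _ => zero_le_one) (by simp) (fun _ => hW)
      (by rwa [hcombo])
  refine ⟨csInf_eq_of_forall_gt_mem ?_ ?_, csInf_eq_of_forall_gt_mem ?_ ?_,
    csInf_eq_of_forall_gt_mem ?_ ?_⟩
  · rintro r ⟨-, z, hz, S, hS, hsub⟩
    exact hweak hz hS.isRelWeakOpen hsub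
  · exact fun r hr => ⟨hpos.trans hr, exists_slice_subset_closedBall hq hr⟩
  · rintro r ⟨-, z, hz, W, hW, hsub⟩
    exact hweak hz hW hsub
  · intro r hr
    obtain ⟨z, hz, S, hS, hsub⟩ := exists_slice_subset_closedBall (X := X) (Y := Y) hq hr
    exact ⟨hpos.trans hr, z, hz, S, hS.isRelWeakOpen, hsub⟩
  · rintro r ⟨-, z, hz, n, l, W, hl, hl1, hW, hsub⟩
    exact two_rpow_le_of_comboSet_subset hX hY hq hz hl hl1 hW hsub
  · intro r hr
    obtain ⟨z, hz, S, hS, hsub⟩ := exists_slice_subset_closedBall (X := X) (Y := Y) hq hr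
    exact ⟨hpos.trans hr, z, hz, 1, fun _ => 1, fun _ => S, fun _ => zero_le_one, by simp,
      fun _ => hS.isRelWeakOpen, by rwa [hcombo]⟩
end
end

section
/- For every r ∈ [0,2] there exists a real Banach space X such that 𝒯^s(X) = 𝒯(X) = 𝒯^cc(X) = r. -/
open Metric Set

noncomputable section

variable (X : Type*) [NormedAddCommGroup X] [NormedSpace ℝ X]

open Filter Topology

/-- If all convex combinations of relatively weakly open sets have radius at least `r`,
and some slices have radius arbitrarily close to `r`, then the three thickness indices are `r`. -/
theorem thickness_eq_of_bounds {E : Type*} [NormedAddCommGroup E] [NormedSpace ℝ E] {r : ℝ}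
    (hr : 0 ≤ r)
    (upper : ∀ ε > 0, ∃ x : E, ‖x‖ = 1 ∧ ∃ S : Set E, IsSlice E S ∧ S ⊆ closedBall x (r + ε))
    (lower : ∀ ρ > 0, ∀ x : E, ‖x‖ = 1 → ∀ (n : ℕ) (l : Fin n → ℝ) (W : Fin n → Set E),
      (∀ i, 0 ≤ l i) → ∑ i, l i = 1 → (∀ i, IsRelWeakOpen E (W i)) →
      comboSet E l W ⊆ closedBall x ρ → r ≤ ρ) :
    Ts E = r ∧ Tw E = r ∧ Tcc E = r := by
  have slice_weak : ∀ S : Set E, IsSlice E S → IsRelWeakOpen E S := by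
    rintro S ⟨f, hf, α, hα, rfl⟩
    refine ⟨?_, {y | 1 - α < f y}, ?_, rfl⟩
    · obtain ⟨y, hy, hfy⟩ := f.exists_lt_apply_of_lt_opNorm (r := 1 - α) (by linarith)
      rcases le_total 0 (f y) with h | h
      · rw [Real.norm_of_nonneg h] at hfy
        exact ⟨y, by simpa using hy.le, hfy⟩
      · rw [Real.norm_of_nonpos h] at hfy
        exact ⟨-y, by simpa using hy.le, by simpa using hfy⟩
    · have hc : Continuous fun x : WeakSpace ℝ E => f ((toWeakSpace ℝ E).symm x) :=
        WeakBilin.eval_continuous (topDualPairing ℝ E).flip f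
      have := isOpen_lt continuous_const hc (f := fun _ => 1 - α)
      rw [IsWeaklyOpen]
      convert this using 1
      ext x
      constructor
      · rintro ⟨y, hy, rfl⟩
        simpa using hy
      · intro hx
        exact ⟨(toWeakSpace ℝ E).symm x, hx, by simp⟩
  have Ts_sub_Tw : {r : ℝ | 0 < r ∧ ∃ x : E, ‖x‖ = 1 ∧ ∃ S : Set E, IsSlice E S ∧
      S ⊆ closedBall x r} ⊆ {r : ℝ | 0 < r ∧ ∃ x : E, ‖x‖ = 1 ∧ ∃ W : Set E, IsRelWeakOpen E W ∧
      W ⊆ closedBall x r} := by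
    rintro ρ ⟨hρ, x, hx, S, hS, hSx⟩
    exact ⟨hρ, x, hx, S, slice_weak S hS, hSx⟩
  have Tw_sub_Tcc : {r : ℝ | 0 < r ∧ ∃ x : E, ‖x‖ = 1 ∧ ∃ W : Set E, IsRelWeakOpen E W ∧
      W ⊆ closedBall x r} ⊆ {r : ℝ | 0 < r ∧ ∃ x : E, ‖x‖ = 1 ∧
      ∃ (n : ℕ) (l : Fin n → ℝ) (W : Fin n → Set E),
      (∀ i, 0 ≤ l i) ∧ (∑ i, l i) = 1 ∧ (∀ i, IsRelWeakOpen E (W i)) ∧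
      comboSet E l W ⊆ closedBall x r} := by
    rintro ρ ⟨hρ, x, hx, W, hW, hWx⟩
    refine ⟨hρ, x, hx, 1, fun _ => 1, fun _ => W, by simp, by simp, fun _ => hW, ?_⟩
    rintro z ⟨w, hw, rfl⟩
    simpa using hWx (hw 0)
  have mem : ∀ ε > 0, r + ε ∈ {r : ℝ | 0 < r ∧ ∃ x : E, ‖x‖ = 1 ∧ ∃ S : Set E, IsSlice E S ∧
      S ⊆ closedBall x r} := fun ε hε => ⟨by linarith, upper ε hε⟩
  have Ts_le : Ts E ≤ r :=
    le_of_forall_pos_le_add fun ε hε => csInf_le ⟨0, fun _ h => h.1.le⟩ (mem ε hε)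
  have Tw_le : Tw E ≤ Ts E :=
    csInf_le_csInf ⟨0, fun _ h => h.1.le⟩ ⟨_, mem 1 one_pos⟩ Ts_sub_Tw
  have Tcc_le : Tcc E ≤ Tw E :=
    csInf_le_csInf ⟨0, fun _ h => h.1.le⟩ ⟨_, Ts_sub_Tw (mem 1 one_pos)⟩ Tw_sub_Tcc
  have le_Tcc : r ≤ Tcc E := by
    refine le_csInf ⟨_, Tw_sub_Tcc (Ts_sub_Tw (mem 1 one_pos))⟩ ?_
    rintro ρ ⟨hρ, x, hx, n, l, W, hl, hsum, hW, hsub⟩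
    exact lower ρ hρ x hx n l W hl hsum hW hsub
  refine ⟨?_, ?_, ?_⟩ <;> linarith

/-- A weakly convergent sequence in the unit ball whose limit lies in a relatively weakly open set
is eventually in that set. -/
theorem IsRelWeakOpen.eventually_mem {E : Type*} [NormedAddCommGroup E] [NormedSpace ℝ E]
    {W : Set E} (hW : IsRelWeakOpen E W) {w : E} (hw : w ∈ W) {v : ℕ → E}
    (hv : ∀ n, ‖v n‖ ≤ 1) (hlim : ∀ φ : E →L[ℝ] ℝ, Tendsto (fun n => φ (v n)) atTop (𝓝 (φ w))) :
    ∀ᶠ n in atTop, v n ∈ W := by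
  obtain ⟨-, U, hU, rfl⟩ := hW
  have hweak : Tendsto (fun n => toWeakSpace ℝ E (v n)) atTop (𝓝 (toWeakSpace ℝ E w)) := by
    have hind : IsInducing fun (x : WeakBilin (topDualPairing ℝ E).flip) φ =>
      (topDualPairing ℝ E).flip x φ := ⟨rfl⟩
    exact hind.tendsto_nhds_iff.2 (tendsto_pi_nhds.2 hlim)
  filter_upwards [hweak.eventually (hU.mem_nhds (mem_image_of_mem _ hw.2))] with n hn
  exact ⟨by simpa using hv n, by simpa using hn⟩

/-- Norm-one functionals which separate `x` from weak approximations of arbitrary points of the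
ball by a gap `r` give a lower bound for the radius of convex combinations of weakly open sets. -/
theorem le_radius_of_weak_approx {E : Type*} [NormedAddCommGroup E] [NormedSpace ℝ E] {r ρ : ℝ}
    {x : E} {g : ℕ → E →L[ℝ] ℝ} (hg : ∀ n z, g n z ≤ ‖z‖) {c d : ℝ} (hx : ∀ n, g n x ≤ -c)
    (hcd : r ≤ c + d)
    (approx : ∀ w : E, ‖w‖ ≤ 1 → ∃ v : ℕ → E, (∀ n, ‖v n‖ ≤ 1) ∧ (∀ n, d ≤ g n (v n)) ∧
      ∀ φ : E →L[ℝ] ℝ, Tendsto (fun n => φ (v n)) atTop (𝓝 (φ w)))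
    {n : ℕ} {l : Fin n → ℝ} {W : Fin n → Set E} (hl : ∀ i, 0 ≤ l i) (hsum : ∑ i, l i = 1)
    (hW : ∀ i, IsRelWeakOpen E (W i)) (hsub : comboSet E l W ⊆ closedBall x ρ) : r ≤ ρ := by
  choose w hw using fun i => (hW i).1
  have hw1 : ∀ i, ‖w i‖ ≤ 1 := fun i => by
    obtain ⟨-, U, -, hU⟩ := hW i
    have := hw i
    rw [hU] at this
    simpa using this.1
  choose v hv hgv hlim using fun i => approx (w i) (hw1 i)
  obtain ⟨k, hk⟩ := (eventually_all.2 fun i =>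
    (hW i).eventually_mem (hw i) (hv i) (hlim i)).exists
  have hz := hsub ⟨fun i => v i k, hk, rfl⟩
  rw [mem_closedBall, dist_eq_norm] at hz
  have hd : d ≤ g k (∑ i, l i • v i k) := by
    calc d = ∑ i, l i * d := by rw [← Finset.sum_mul, hsum, one_mul]
      _ ≤ ∑ i, l i * g k (v i k) :=
        Finset.sum_le_sum fun i _ => mul_le_mul_of_nonneg_left (hgv i k) (hl i)
      _ = g k (∑ i, l i • v i k) := by simp
  have := hg k (∑ i, l i • v i k - x)
  rw [map_sub] at this
  linarith [hx k]

/-- A uniformly bounded sequence of continuous functions with disjoint supports is weakly null. -/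
theorem tendsto_apply_zero_of_disjoint {K : Type*} [TopologicalSpace K] [CompactSpace K]
    {h : ℕ → C(K, ℝ)} {M : ℝ} (hM : ∀ n t, |h n t| ≤ M)
    (hdisj : ∀ t m n, m ≠ n → h m t = 0 ∨ h n t = 0) (φ : C(K, ℝ) →L[ℝ] ℝ) :
    Tendsto (fun n => φ (h n)) atTop (𝓝 0) := by
  have hsum : Summable fun n => |φ (h n)| := by
    refine summable_of_sum_le (c := ‖φ‖ * |M|) (fun _ => abs_nonneg _) fun F => ?_
    have hφ : ∑ n ∈ F, |φ (h n)| = φ (∑ n ∈ F, (SignType.sign (φ (h n)) : ℝ) • h n) := by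
      simp [sign_mul_self]
    rw [hφ]
    refine (le_abs_self _).trans ((φ.le_opNorm _).trans ?_)
    refine mul_le_mul_of_nonneg_left ?_ (norm_nonneg _)
    refine (ContinuousMap.norm_le _ (abs_nonneg _)).2 fun t => ?_
    rw [ContinuousMap.sum_apply]
    by_cases hz : ∃ m ∈ F, h m t ≠ 0
    · obtain ⟨m, hm, hmt⟩ := hz
      rw [Finset.sum_eq_single_of_mem m hm]
      · rw [ContinuousMap.smul_apply, smul_eq_mul, norm_mul]
        have h1 : ‖(SignType.sign (φ (h m)) : ℝ)‖ ≤ 1 := by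
          cases SignType.sign (φ (h m)) <;> simp
        calc _ ≤ 1 * ‖h m t‖ := mul_le_mul_of_nonneg_right h1 (norm_nonneg _)
          _ ≤ |M| := by
            rw [one_mul, Real.norm_eq_abs]
            exact (hM m t).trans (le_abs_self M)
      · intro n _ hn
        simp [(hdisj t m n hn.symm).resolve_left hmt]
    · push Not at hz
      rw [Finset.sum_eq_zero fun m hm => by simp [hz m hm]]
      simp
  exact (tendsto_zero_iff_abs_tendsto_zero _).2 hsum.tendsto_atTop_zero

/-- Every infinite open subset of a compact Hausdorff space carries a sequence of disjointly
supported bump functions. -/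
theorem exists_disjoint_bumps {K : Type*} [TopologicalSpace K] [CompactSpace K] [T2Space K]
    {U : Set K} (hU : IsOpen U) (hinf : U.Infinite) :
    ∃ (t : ℕ → K) (b : ℕ → C(K, ℝ)), (∀ n, t n ∈ U) ∧ (∀ n, b n (t n) = 1) ∧
      (∀ n s, b n s ∈ Icc (0 : ℝ) 1) ∧ (∀ n, ∀ s ∉ U, b n s = 0) ∧
      ∀ s m n, m ≠ n → b m s = 0 ∨ b n s = 0 := by
  have : Infinite U := hinf.to_subtype
  obtain ⟨V, hVinf, hVo, hVd⟩ := exists_seq_infinite_isOpen_pairwise_disjoint U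
  choose t ht using fun n => (hVinf n).nonempty
  have hVo' : ∀ n, IsOpen ((↑) '' V n : Set K) := fun n => hU.isOpenMap_subtype_val _ (hVo n)
  choose b hb0 hb1 hb using fun n => exists_continuous_zero_one_of_isClosed
    (hVo' n).isClosed_compl (isClosed_singleton (x := (t n : K)))
    (disjoint_singleton_right.2 fun h => h (mem_image_of_mem _ (ht n)))
  refine ⟨fun n => t n, b, fun n => (t n).2, fun n => hb1 n rfl, hb, fun n s hs => hb0 n ?_, ?_⟩
  · rintro ⟨u, -, rfl⟩
    exact hs u.2
  · intro s m n hmn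
    by_contra! hne
    obtain ⟨u, hu, rfl⟩ := not_not.1 fun h => hne.1 (hb0 m h)
    obtain ⟨u', hu', h⟩ := not_not.1 fun h => hne.2 (hb0 n h)
    exact (hVd hmn).le_bot ⟨hu, Subtype.ext h ▸ hu'⟩

/-- For the norm `‖f‖ + κ |f p|` on `C(K)` with `K` perfect, convex combinations of relatively
weakly open subsets of the ball have radius at least `2 / (1 + κ)`. -/
theorem le_radius_of_renorming {K : Type*} [TopologicalSpace K] [CompactSpace K] [T2Space K]
    [∀ t : K, (𝓝[≠] t).NeBot] {E : Type*} [NormedAddCommGroup E] [NormedSpace ℝ E] {κ : ℝ} (hκ : 0 ≤ κ) (p : K) (e : C(K, ℝ) ≃ₗ[ℝ] E)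
    (he : ∀ f, ‖e f‖ = ‖f‖ + κ * |f p|) {ρ : ℝ} {x : E} (hx : ‖x‖ = 1)
    {n : ℕ} {l : Fin n → ℝ} {W : Fin n → Set E} (hl : ∀ i, 0 ≤ l i) (hsum : ∑ i, l i = 1)
    (hW : ∀ i, IsRelWeakOpen E (W i)) (hsub : comboSet E l W ⊆ closedBall x ρ) :
    2 / (1 + κ) ≤ ρ := by
  refine le_of_forall_pos_sub_le fun ε hε => ?_
  obtain ⟨u, rfl⟩ := e.surjective x
  set s := 1 / (1 + κ) with hs
  have hs1 : (1 + κ) * s = 1 := by rw [hs]; field_simp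
  have hspos : 0 < s := by positivity
  have habs : ∀ (f : C(K, ℝ)) t, |f t| ≤ ‖f‖ := fun f t => f.norm_coe_le_norm t
  have hsu : s ≤ ‖u‖ := by
    rw [he] at hx
    nlinarith [mul_le_mul_of_nonneg_left (habs u p) hκ]
  obtain ⟨t₀, ht₀⟩ : ∃ t₀, s - ε < |u t₀| := by
    by_contra! h
    have : ‖u‖ ≤ max (s - ε) 0 :=
      (ContinuousMap.norm_le _ (le_max_right _ _)).2 fun t => (h t).trans (le_max_left _ _)
    rcases le_max_iff.1 this with h | h <;> linarith
  obtain ⟨σ, hσ, hσu⟩ : ∃ σ : ℝ, |σ| = 1 ∧ σ * u t₀ = |u t₀| := by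
    rcases le_total 0 (u t₀) with h | h
    · exact ⟨1, by simp, by simp [abs_of_nonneg h]⟩
    · exact ⟨-1, by simp, by simp [abs_of_nonpos h]⟩
  have hσσ : σ * σ = 1 := by rw [← abs_mul_abs_self, hσ, one_mul]
  have hVo : IsOpen {t : K | s - ε < σ * u t} := isOpen_lt continuous_const (by fun_prop)
  have hVinf : {t : K | s - ε < σ * u t}.Infinite :=
    infinite_of_mem_nhds t₀ (hVo.mem_nhds (by simpa [hσu] using ht₀))
  obtain ⟨t, b, htU, hb1, hb, hb0, hbd⟩ := exists_disjoint_bumps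
    (hVo.sdiff (isClosed_singleton (x := p))) (hVinf.sdiff (finite_singleton p))
  have hbp : ∀ n, b n p = 0 := fun n => hb0 n p fun h => h.2 rfl
  let g : ℕ → E →L[ℝ] ℝ := fun n =>
    ((-σ) • ((ContinuousMap.evalCLM ℝ (t n)).toLinearMap ∘ₗ e.symm.toLinearMap)).mkContinuous 1 (by
      intro z
      obtain ⟨f, rfl⟩ := e.surjective z
      have := habs f (t n)
      have := mul_nonneg hκ (abs_nonneg (f p))
      simp only [LinearMap.smul_apply, LinearMap.comp_apply, LinearEquiv.coe_coe,
        e.symm_apply_apply, norm_smul, norm_neg, Real.norm_eq_abs, hσ, he]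
      simp
      linarith)
  have hg : ∀ n f, g n (e f) = -σ * f (t n) := fun n f => by simp [g]
  refine le_radius_of_weak_approx (g := g) (x := e u) (c := s - ε) (d := s) (fun n z => ?_)
    (fun n => ?_) (by rw [hs]; ring_nf; rfl) (fun w hw => ?_) hl hsum hW hsub
  · refine (le_abs_self _).trans (((g n).le_opNorm z).trans ?_)
    refine mul_le_of_le_one_left (norm_nonneg _) (LinearMap.mkContinuous_norm_le _ zero_le_one _)
  · rw [hg]
    have : s - ε < σ * u (t n) := (htU n).1
    linarith
  · obtain ⟨f, rfl⟩ := e.surjective w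
    rw [he] at hw
    set d := 1 - κ * |f p| with hd
    have hfd : ‖f‖ ≤ d := by linarith
    have hsd : s ≤ d := by nlinarith [habs f p, mul_le_mul_of_nonneg_left (habs f p) hκ]
    let h : ℕ → C(K, ℝ) := fun n => b n * (ContinuousMap.const K (-σ * d) - f)
    have hh : ∀ n t, h n t = b n t * (-σ * d - f t) := fun n t => rfl
    refine ⟨fun n => e (f + h n), fun n => ?_, fun n => ?_, fun φ => ?_⟩
    · have h1 : ‖f + h n‖ ≤ d := by
        refine (ContinuousMap.norm_le _ (by linarith)).2 fun t => ?_
        have : (f + h n) t = (1 - b n t) * f t + b n t * (-σ * d) := by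
          rw [ContinuousMap.add_apply, hh]; ring
        rw [this, Real.norm_eq_abs]
        refine (abs_add_le _ _).trans ?_
        rw [abs_mul, abs_mul, abs_mul, abs_neg, hσ, abs_of_nonneg (hb n t).1,
          abs_of_nonneg (sub_nonneg.2 (hb n t).2), abs_of_nonneg (by linarith : 0 ≤ d)]
        nlinarith [habs f t, (hb n t).1, (hb n t).2]
      have h2 : (f + h n) p = f p := by simp [hh, hbp]
      rw [he, h2]
      linarith
    · rw [hg, ContinuousMap.add_apply, hh, hb1]
      linear_combination hsd - d * hσσ
    · let ψ : C(K, ℝ) →L[ℝ] ℝ := φ.comp (e.toLinearMap.mkContinuous (1 + κ) fun f => by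
        rw [LinearEquiv.coe_coe, he]
        nlinarith [mul_le_mul_of_nonneg_left (habs f p) hκ])
      have hψ : ∀ f, ψ f = φ (e f) := fun f => rfl
      have hlim : Tendsto (fun n => ψ (h n)) atTop (𝓝 0) := by
        refine tendsto_apply_zero_of_disjoint (M := d + ‖f‖) (fun n t => ?_) (fun t m n hmn => ?_) ψ
        · rw [hh, abs_mul, abs_of_nonneg (hb n t).1]
          refine (mul_le_of_le_one_left (abs_nonneg _) (hb n t).2).trans ?_
          refine (abs_sub _ _).trans ?_
          rw [abs_mul, abs_neg, hσ, abs_of_nonneg (by linarith : 0 ≤ d)]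
          linarith [habs f t]
        · rcases hbd t m n hmn with h | h <;> simp [hh, h]
      simpa [hψ] using hlim.const_add (φ (e f))

/-- For the norm `‖f‖ + κ |f p|` on `C(K)`, the slices given by evaluation at `p` have radius
arbitrarily close to `2 / (1 + κ)`. -/
theorem exists_slice_of_renorming {K : Type*} [TopologicalSpace K] [CompactSpace K]
    {E : Type*} [NormedAddCommGroup E] [NormedSpace ℝ E] {κ : ℝ} (hκ : 0 ≤ κ) (p : K) (e : C(K, ℝ) ≃ₗ[ℝ] E)
    (he : ∀ f, ‖e f‖ = ‖f‖ + κ * |f p|) {ε : ℝ} (hε : 0 < ε) :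
    ∃ x : E, ‖x‖ = 1 ∧ ∃ S : Set E, IsSlice E S ∧ S ⊆ closedBall x (2 / (1 + κ) + ε) := by
  set s := 1 / (1 + κ) with hs
  have hs1 : (1 + κ) * s = 1 := by rw [hs]; field_simp
  have hspos : 0 < s := by positivity
  have h2s : 2 / (1 + κ) = 2 * s := by rw [hs]; ring
  have habs : ∀ (f : C(K, ℝ)) t, |f t| ≤ ‖f‖ := fun f t => f.norm_coe_le_norm t
  have : Nonempty K := ⟨p⟩
  have hx : ‖e (ContinuousMap.const K s)‖ = 1 := by
    have : ‖ContinuousMap.const K s‖ = s := by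
      refine le_antisymm ((ContinuousMap.norm_le _ hspos.le).2 fun t => ?_) ?_
      · simp [abs_of_pos hspos]
      · simpa [abs_of_pos hspos] using habs (ContinuousMap.const K s) p
    rw [he, this, ContinuousMap.const_apply, abs_of_pos hspos]
    linarith
  let a : E →L[ℝ] ℝ :=
    ((1 + κ) • ((ContinuousMap.evalCLM ℝ p).toLinearMap ∘ₗ e.symm.toLinearMap)).mkContinuous 1 (by
      intro z
      obtain ⟨f, rfl⟩ := e.surjective z
      simp only [LinearMap.smul_apply, LinearMap.comp_apply, LinearEquiv.coe_coe,
        e.symm_apply_apply, norm_smul, Real.norm_eq_abs, he, abs_of_nonneg (by linarith : 0 ≤ 1 + κ)]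
      simp
      linarith [habs f p])
  have ha : ∀ f, a (e f) = (1 + κ) * f p := fun f => by simp [a]
  have hanorm : ‖a‖ = 1 := by
    refine le_antisymm (LinearMap.mkContinuous_norm_le _ zero_le_one _) ?_
    have := a.le_opNorm (e (ContinuousMap.const K s))
    rw [ha, hx, ContinuousMap.const_apply, hs1] at this
    simpa using this
  refine ⟨_, hx, sliceSet E a (ε / 2), ⟨a, hanorm, ε / 2, by linarith, rfl⟩, ?_⟩
  rintro z ⟨hz, haz⟩
  obtain ⟨f, rfl⟩ := e.surjective z
  rw [mem_closedBall_zero_iff, he] at hz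
  rw [ha] at haz
  have hfp : s - s * (ε / 2) < f p := by nlinarith
  have hfp' : f p ≤ s := by nlinarith [habs f p, le_abs_self (f p)]
  have hκs : κ * s ≤ 1 := by linarith
  rw [mem_closedBall, dist_eq_norm, ← map_sub, he, h2s]
  have hκp : κ * (s - s * (ε / 2)) ≤ κ * |f p| :=
    mul_le_mul_of_nonneg_left (hfp.le.trans (le_abs_self _)) hκ
  have hpt : ‖f - ContinuousMap.const K s‖ ≤ 2 * s + ε / 2 := by
    refine (norm_sub_le _ _).trans ?_
    have : ‖ContinuousMap.const K s‖ ≤ s :=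
      (ContinuousMap.norm_le _ hspos.le).2 fun t => by simp [abs_of_pos hspos]
    nlinarith
  have hat : |(f - ContinuousMap.const K s) p| ≤ s * (ε / 2) := by
    rw [ContinuousMap.sub_apply, ContinuousMap.const_apply, abs_le]
    constructor <;> nlinarith
  nlinarith [mul_le_mul_of_nonneg_left hat hκ]

/-- The closed subspace `{(f, κ f(p))}` of `C(K) ⊕₁ ℝ`, isometric to `C(K)` with the norm
`‖f‖ + κ |f p|`. -/
def renormedC (K : Type*) [TopologicalSpace K] [CompactSpace K] (κ : ℝ) (p : K) :
    Submodule ℝ (WithLp 1 (C(K, ℝ) × ℝ)) where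
  carrier := {z | z.snd = κ * z.fst p}
  add_mem' {y z} hy hz := by
    simp only [mem_ofPred_eq] at *
    simp [hy, hz, mul_add]
  zero_mem' := by simp
  smul_mem' c z hz := by
    simp only [mem_ofPred_eq] at *
    simp [hz, mul_left_comm]

theorem isClosed_renormedC (K : Type*) [TopologicalSpace K] [CompactSpace K] (κ : ℝ) (p : K) :
    IsClosed (renormedC K κ p : Set (WithLp 1 (C(K, ℝ) × ℝ))) := by
  have h1 : Continuous fun z : WithLp 1 (C(K, ℝ) × ℝ) => z.snd :=
    continuous_snd.comp (WithLp.prod_continuous_ofLp 1 _ _)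
  have h2 : Continuous fun z : WithLp 1 (C(K, ℝ) × ℝ) => z.fst p :=
    (ContinuousMap.evalCLM ℝ p).continuous.comp
      (continuous_fst.comp (WithLp.prod_continuous_ofLp 1 _ _))
  exact isClosed_eq h1 (continuous_const.mul h2)

/-- The linear identification of `C(K)` with `renormedC K κ p`. -/
def renormedCEquiv (K : Type*) [TopologicalSpace K] [CompactSpace K] (κ : ℝ) (p : K) :
    C(K, ℝ) ≃ₗ[ℝ] renormedC K κ p where
  toFun f := ⟨WithLp.toLp 1 (f, κ * f p), rfl⟩
  map_add' f g := by
    ext1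
    simp [mul_add, ← WithLp.toLp_add]
  map_smul' c f := by
    ext1
    simp [mul_left_comm, ← WithLp.toLp_smul]
  invFun z := z.1.fst
  left_inv f := rfl
  right_inv z := by
    ext1
    exact congrArg (WithLp.toLp 1) (Prod.ext rfl z.2.symm)

theorem norm_renormedCEquiv {K : Type*} [TopologicalSpace K] [CompactSpace K] {κ : ℝ}
    (hκ : 0 ≤ κ) (p : K) (f : C(K, ℝ)) :
    ‖renormedCEquiv K κ p f‖ = ‖f‖ + κ * |f p| := by
  have : ‖renormedCEquiv K κ p f‖ = ‖f‖ + ‖κ * f p‖ := WithLp.prod_norm_eq_of_L1 _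
  rw [this, norm_mul, Real.norm_of_nonneg hκ, Real.norm_eq_abs]

theorem thickness_renormedC (K : Type*) [TopologicalSpace K] [CompactSpace K] [T2Space K]
    [∀ t : K, (𝓝[≠] t).NeBot] {κ : ℝ} (hκ : 0 ≤ κ) (p : K) :
    Ts (renormedC K κ p) = 2 / (1 + κ) ∧ Tw (renormedC K κ p) = 2 / (1 + κ) ∧
      Tcc (renormedC K κ p) = 2 / (1 + κ) :=
  thickness_eq_of_bounds (by positivity)
    (fun _ hε => exists_slice_of_renorming hκ p (renormedCEquiv K κ p)
      (norm_renormedCEquiv hκ p) hε)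
    fun _ _ _ hx _ _ _ hl hsum hW hsub => le_radius_of_renorming hκ p (renormedCEquiv K κ p)
      (norm_renormedCEquiv hκ p) hx hl hsum hW hsub

theorem thickness_real : Ts ℝ = 0 ∧ Tw ℝ = 0 ∧ Tcc ℝ = 0 := by
  refine thickness_eq_of_bounds le_rfl (fun ε hε => ?_) fun ρ hρ _ _ _ _ _ _ _ _ _ => hρ.le
  refine ⟨1, by simp, _, ⟨.id ℝ ℝ, ContinuousLinearMap.norm_id, ε, hε, rfl⟩, ?_⟩
  rintro y ⟨hy, hy'⟩
  rw [mem_closedBall_zero_iff, Real.norm_eq_abs, abs_le] at hy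
  rw [ContinuousLinearMap.id_apply] at hy'
  rw [mem_closedBall, Real.dist_eq, abs_le]
  constructor <;> linarith

theorem stmt_9 (r : ℝ) (hr₀ : 0 ≤ r) (hr₂ : r ≤ 2) :
    ∃ (X : Type) (_ : NormedAddCommGroup X) (_ : NormedSpace ℝ X) (_ : CompleteSpace X)
      (_ : Nontrivial X), Ts X = r ∧ Tw X = r ∧ Tcc X = r := by
  rcases hr₀.eq_or_lt with rfl | hr
  · exact ⟨ℝ, inferInstance, inferInstance, inferInstance, inferInstance, thickness_real⟩
  have hκ : 0 ≤ 2 / r - 1 := by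
    rw [sub_nonneg, le_div_iff₀ hr]
    linarith
  have hrκ : 2 / (1 + (2 / r - 1)) = r := by
    field_simp
    ring
  refine ⟨renormedC unitInterval (2 / r - 1) 0, inferInstance, inferInstance,
    (isClosed_renormedC _ _ _).completeSpace_coe,
    (renormedCEquiv unitInterval (2 / r - 1) 0).symm.toEquiv.nontrivial, ?_⟩
  have := thickness_renormedC unitInterval hκ 0
  rwa [hrκ] at this
end
end

section
/- Let X and Y be real Banach spaces. Then 𝒯^s(X ⊕_∞ Y) ≥ min{𝒯^s(X), 𝒯^s(Y)}, and if moreover 𝒯^s(X ⊕_∞ Y) > 1, then 𝒯^s(X ⊕_∞ Y) = min{𝒯^s(X), 𝒯^s(Y)}; here X ⊕_∞ Y is the ℓ_∞-sum of X and Y. -/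
open Metric Set

noncomputable section

variable (X : Type*) [NormedAddCommGroup X] [NormedSpace ℝ X]

section DaugavetIndex

variable {E F : Type*} [NormedAddCommGroup E] [NormedSpace ℝ E]
  [NormedAddCommGroup F] [NormedSpace ℝ F]

theorem Ts_le {r α : ℝ} {x : E} {f : E →L[ℝ] ℝ} (hr : 0 < r) (hx : ‖x‖ = 1) (hf : ‖f‖ = 1)
    (hα : 0 < α) (h : ∀ y : E, ‖y‖ ≤ 1 → 1 - α < f y → ‖y - x‖ ≤ r) : Ts E ≤ r := by
  refine csInf_le ⟨0, fun s hs => hs.1.le⟩ ⟨hr, x, hx, sliceSet E f α, ⟨f, hf, α, hα, rfl⟩, ?_⟩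
  rintro y ⟨hy, hfy⟩
  rw [mem_closedBall, dist_eq_norm]
  exact h y (by simpa using hy) hfy

theorem le_Ts [Nontrivial E] {c : ℝ}
    (h : ∀ (r α : ℝ) (x : E) (f : E →L[ℝ] ℝ), 0 < r → ‖x‖ = 1 → ‖f‖ = 1 → 0 < α →
      (∀ y : E, ‖y‖ ≤ 1 → 1 - α < f y → ‖y - x‖ ≤ r) → c ≤ r) : c ≤ Ts E := by
  refine le_csInf ?_ ?_
  · obtain ⟨x, hx⟩ := exists_norm_eq E zero_le_one
    obtain ⟨f, hf, -⟩ := exists_dual_vector' ℝ x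
    refine ⟨2, two_pos, x, hx, sliceSet E f 1, ⟨f, hf, 1, one_pos, rfl⟩, ?_⟩
    rintro y ⟨hy, -⟩
    rw [mem_closedBall_zero_iff] at hy
    rw [mem_closedBall, dist_eq_norm]
    linarith [norm_sub_le y x]
  · rintro r ⟨hr, x, hx, S, ⟨f, hf, α, hα, rfl⟩, hS⟩
    refine h r α x f hr hx hf hα fun y hy hfy => ?_
    rw [← dist_eq_norm, ← mem_closedBall]
    exact hS ⟨by simpa using hy, hfy⟩

theorem Ts_le_of_linearIsometryEquiv [Nontrivial F] (e : E ≃ₗᵢ[ℝ] F) : Ts E ≤ Ts F := by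
  refine le_Ts fun r α x f hr hx hf hα h => ?_
  refine Ts_le (x := e.symm x) (f := f ∘L (e : E →L[ℝ] F)) hr (by simpa using hx) ?_ hα ?_
  · simpa using (f.opNorm_comp_linearIsometryEquiv e).trans hf
  · intro y hy hfy
    have := h (e y) (by simpa using hy) (by simpa using hfy)
    rwa [← e.norm_map, map_sub, e.apply_symm_apply]

/-- The index `Ts` is invariant under linear isometries. -/
theorem Ts_congr [Nontrivial E] [Nontrivial F] (e : E ≃ₗᵢ[ℝ] F) : Ts E = Ts F :=
  (Ts_le_of_linearIsometryEquiv e).antisymm (Ts_le_of_linearIsometryEquiv e.symm)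

theorem exists_norm_eq_one_and_eq_norm_smul [Nontrivial E] (g : E →L[ℝ] ℝ) :
    ∃ g' : E →L[ℝ] ℝ, ‖g'‖ = 1 ∧ g = ‖g‖ • g' := by
  by_cases hg : g = 0
  · obtain ⟨g', hg', -⟩ := exists_dual_vector' ℝ (0 : E)
    exact ⟨g', hg', by simp [hg]⟩
  · have hn : ‖g‖ ≠ 0 := norm_ne_zero_iff.2 hg
    exact ⟨‖g‖⁻¹ • g, by simp [norm_smul, hn], by rw [smul_smul, mul_inv_cancel₀ hn, one_smul]⟩

theorem exists_norm_le_one_and_norm_sub_lt (g : E →L[ℝ] ℝ) {ε : ℝ} (hε : 0 < ε) :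
    ∃ v : E, ‖v‖ ≤ 1 ∧ ‖g‖ - ε < g v := by
  obtain ⟨v, hv, hgv⟩ := g.exists_lt_apply_of_lt_opNorm (sub_lt_self _ hε)
  rcases abs_cases (g v) with h | h
  · exact ⟨v, hv.le, by rwa [Real.norm_eq_abs, h.1] at hgv⟩
  · exact ⟨-v, by simpa using hv.le, by rwa [Real.norm_eq_abs, h.1, ← map_neg] at hgv⟩

/-- If a slice of the unit ball of `E × F` lies in a ball whose center has a norm-one first
coordinate, then some slice of the unit ball of `E` lies in a ball of the same radius. -/
theorem Ts_le_of_slice_prod [Nontrivial E] {r α : ℝ} {x : E} {y : F} {f : E × F →L[ℝ] ℝ}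
    (hr : 0 < r) (hx : ‖x‖ = 1) (hf : ‖f‖ = 1) (hα : 0 < α)
    (h : ∀ z : E × F, ‖z‖ ≤ 1 → 1 - α < f z → ‖z - (x, y)‖ ≤ r) : Ts E ≤ r := by
  set g := f ∘L ContinuousLinearMap.inl ℝ E F with hg
  set k := f ∘L ContinuousLinearMap.inr ℝ E F
  have hadd (u : E) (v : F) : f (u, v) = g u + k v := (f.comp_inl_add_comp_inr (u, v)).symm
  have hg1 : ‖g‖ ≤ 1 := by
    refine g.opNorm_le_bound zero_le_one fun u => ?_
    simpa [hg, hf] using f.le_opNorm (u, 0)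
  have hgk : 1 ≤ ‖g‖ + ‖k‖ := by
    rw [← hf]
    refine f.opNorm_le_bound (by positivity) fun z => ?_
    rw [← z.eta, hadd, add_mul]
    exact (norm_add_le _ _).trans <| add_le_add
      (g.le_opNorm_of_le (norm_fst_le z)) (k.le_opNorm_of_le (norm_snd_le z))
  obtain ⟨g', hg', hgg'⟩ := exists_norm_eq_one_and_eq_norm_smul g
  obtain ⟨v, hv, hkv⟩ := exists_norm_le_one_and_norm_sub_lt k (half_pos hα)
  refine Ts_le hr hx hg' (half_pos hα) fun u hu hgu => ?_
  have hgu' : g u = ‖g‖ * g' u := by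
    conv_lhs => rw [hgg']
    rfl
  refine (norm_fst_le ((u, v) - (x, y))).trans (h (u, v) (max_le hu hv) ?_)
  rw [hadd, hgu']
  nlinarith [mul_le_mul_of_nonneg_left hgu.le (norm_nonneg g)]

theorem Ts_prod_le_max [Nontrivial E] : Ts (E × F) ≤ max 1 (Ts E) := by
  by_contra! hlt
  obtain ⟨h1, hE⟩ := max_lt_iff.1 hlt
  refine hE.not_ge (le_Ts fun r α x f hr hx hf hα h => ?_)
  have hmax : Ts (E × F) ≤ max 1 r := by
    refine Ts_le (x := (x, 0)) (f := f ∘L ContinuousLinearMap.fst ℝ E F) (by positivity)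
      (by simp [Prod.norm_def, hx]) ?_ hα fun z hz hfz => ?_
    · refine le_antisymm ?_ ?_
      · simpa [hf] using f.opNorm_comp_le (ContinuousLinearMap.fst ℝ E F) |>.trans
          (mul_le_of_le_one_right (norm_nonneg _) (ContinuousLinearMap.norm_fst_le ℝ E F))
      · rw [← hf]
        refine f.opNorm_le_bound (norm_nonneg _) fun u => ?_
        simpa using (f ∘L ContinuousLinearMap.fst ℝ E F).le_opNorm (u, 0)
    · refine max_le ?_ ?_
      · exact (h z.1 ((norm_fst_le z).trans hz) hfz).trans (le_max_right _ _)
      · simpa using Or.inl ((norm_snd_le z).trans hz)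
  exact (le_max_iff.1 hmax).resolve_left h1.not_ge

theorem min_Ts_le_Ts_prod [Nontrivial E] [Nontrivial F] :
    min (Ts E) (Ts F) ≤ Ts (E × F) := by
  refine le_Ts fun r α z f hr hz hf hα h => ?_
  obtain ⟨x, y⟩ := z
  rcases max_choice ‖x‖ ‖y‖ with hxy | hxy
  · exact (min_le_left _ _).trans (Ts_le_of_slice_prod hr (hxy.symm.trans hz) hf hα h)
  · let e := LinearIsometryEquiv.prodComm ℝ F E
    refine (min_le_right _ _).trans (Ts_le_of_slice_prod (y := x)
      (f := f ∘L (e : F × E →L[ℝ] E × F)) hr (hxy.symm.trans hz)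
      ((f.opNorm_comp_linearIsometryEquiv e).trans hf) hα fun w hw hfw => ?_)
    have := h (e w) (by simpa using hw) hfw
    rwa [← e.norm_map]

theorem Ts_prod_eq_min [Nontrivial E] [Nontrivial F] (h : 1 < Ts (E × F)) :
    Ts (E × F) = min (Ts E) (Ts F) := by
  refine le_antisymm (le_min ?_ ?_) min_Ts_le_Ts_prod
  · exact (le_max_iff.1 Ts_prod_le_max).resolve_left h.not_ge
  · rw [Ts_congr (LinearIsometryEquiv.prodComm ℝ E F)] at h ⊢
    exact (le_max_iff.1 Ts_prod_le_max).resolve_left h.not_ge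

end DaugavetIndex

theorem stmt_13 (X Y : Type*) [NormedAddCommGroup X] [NormedSpace ℝ X]
    [CompleteSpace X] [Nontrivial X] [NormedAddCommGroup Y] [NormedSpace ℝ Y]
    [CompleteSpace Y] [Nontrivial Y] :
    min (Ts X) (Ts Y) ≤ Ts (WithLp ⊤ (X × Y)) ∧
      (1 < Ts (WithLp ⊤ (X × Y)) → Ts (WithLp ⊤ (X × Y)) = min (Ts X) (Ts Y)) := by
  rw [Ts_congr (WithLp.prodEquivₗᵢ (𝕜 := ℝ) (α := X) (β := Y))]
  exact ⟨min_Ts_le_Ts_prod, Ts_prod_eq_min⟩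
end
end

section
/- Let X and Y be real Banach spaces. Then 𝒯^cc(X ⊕_∞ Y) ≥ min{𝒯^cc(X), 𝒯^cc(Y)}, and if moreover 𝒯^cc(X ⊕_∞ Y) > 1, then 𝒯^cc(X ⊕_∞ Y) = min{𝒯^cc(X), 𝒯^cc(Y)}; here X ⊕_∞ Y is the ℓ_∞-sum of X and Y. -/
open Metric Set

noncomputable section

variable (X : Type*) [NormedAddCommGroup X] [NormedSpace ℝ X]

/-- The preimage of a weakly open set under a continuous affine map is weakly open. -/
lemma IsWeaklyOpen.preimage_affine {E F : Type*} [NormedAddCommGroup E] [NormedSpace ℝ E]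
    [NormedAddCommGroup F] [NormedSpace ℝ F] {U : Set F} (hU : IsWeaklyOpen F U)
    (L : E →L[ℝ] F) (b : F) : IsWeaklyOpen E {a | L a + b ∈ U} := by
  have hcont : Continuous fun a : WeakSpace ℝ E => WeakSpace.map L a + toWeakSpace ℝ F b :=
    (WeakSpace.map L).continuous.add continuous_const
  have himage : toWeakSpace ℝ E '' {a | L a + b ∈ U} =
      (fun a : WeakSpace ℝ E => WeakSpace.map L a + toWeakSpace ℝ F b) ⁻¹'
        (toWeakSpace ℝ F '' U) := by
    ext a
    constructor
    · rintro ⟨a, ha, rfl⟩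
      exact ⟨L a + b, ha, rfl⟩
    · rintro ⟨u, hu, h⟩
      refine ⟨(toWeakSpace ℝ E).symm a, ?_, by simp⟩
      have hu' : u = L ((toWeakSpace ℝ E).symm a) + b := (toWeakSpace ℝ F).injective h
      rwa [mem_ofPred_eq, ← hu']
  unfold IsWeaklyOpen
  rw [himage]
  exact hU.preimage hcont

/-- `r` is the radius of a closed ball centered at `x` which contains a convex combination of
nonempty relatively weakly open subsets of the closed unit ball. -/
def CoversCombo {E : Type*} [NormedAddCommGroup E] [NormedSpace ℝ E] (x : E) (r : ℝ) : Prop :=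
  ∃ (n : ℕ) (l : Fin n → ℝ) (W : Fin n → Set E),
    (∀ i, 0 ≤ l i) ∧ (∑ i, l i) = 1 ∧ (∀ i, IsRelWeakOpen E (W i)) ∧
    comboSet E l W ⊆ closedBall x r

lemma Tcc_eq_sInf (E : Type*) [NormedAddCommGroup E] [NormedSpace ℝ E] :
    Tcc E = sInf {r : ℝ | 0 < r ∧ ∃ x : E, ‖x‖ = 1 ∧ CoversCombo x r} := rfl

section

variable {E : Type*} [NormedAddCommGroup E] [NormedSpace ℝ E]

lemma Tcc_le {x : E} {r : ℝ} (hr : 0 < r) (hx : ‖x‖ = 1) (h : CoversCombo x r) : Tcc E ≤ r :=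
  csInf_le ⟨0, fun _ hs => hs.1.le⟩ ⟨hr, x, hx, h⟩

lemma coversCombo_two {x : E} (hx : ‖x‖ = 1) : CoversCombo x 2 := by
  refine ⟨1, fun _ => 1, fun _ => closedBall 0 1, by simp, by simp, fun _ =>
    ⟨⟨0, by simp⟩, univ, ?_, by simp⟩, ?_⟩
  · rw [IsWeaklyOpen, image_univ, (toWeakSpace ℝ E).surjective.range_eq]
    exact isOpen_univ
  · rintro _ ⟨w, hw, rfl⟩
    have hw0 := hw 0
    rw [mem_closedBall_zero_iff] at hw0
    simp only [Fin.sum_univ_one, one_smul, mem_closedBall, dist_eq_norm]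
    linarith [norm_sub_le (w 0) x]

lemma le_Tcc [Nontrivial E] {c : ℝ}
    (h : ∀ (r : ℝ) (x : E), 0 < r → ‖x‖ = 1 → CoversCombo x r → c ≤ r) : c ≤ Tcc E := by
  rw [Tcc_eq_sInf]
  refine le_csInf ?_ fun r ⟨hr, x, hx, hc⟩ => h r x hr hx hc
  obtain ⟨x, hx⟩ := exists_norm_eq E zero_le_one
  exact ⟨2, two_pos, x, hx, coversCombo_two hx⟩

variable {Z : Type*} [NormedAddCommGroup Z] [NormedSpace ℝ Z] {L : E →L[ℝ] Z} {P : Z →L[ℝ] E}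

/-- A point of `Z` covering a combination projects onto a point of an M-summand which covers
a combination within the same radius. -/
lemma CoversCombo.map_of_summand (hPL : ∀ a, P (L a) = a)
    (hnorm : ∀ z, ‖z‖ = max ‖P z‖ ‖z - L (P z)‖) {z : Z} {r : ℝ} (h : CoversCombo z r) :
    CoversCombo (P z) r := by
  obtain ⟨n, l, W, hl, hsum, hW, hsub⟩ := h
  choose hne U hU hWU using hW
  choose w hw using hne
  refine ⟨n, l, fun i => closedBall 0 1 ∩ {a | L a + (w i - L (P (w i))) ∈ U i}, hl, hsum,
    fun i => ⟨⟨P (w i), ?_, ?_⟩, _, (hU i).preimage_affine L _, rfl⟩, ?_⟩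
  · have hwi := hw i
    rw [hWU i, mem_inter_iff, mem_closedBall_zero_iff, hnorm] at hwi
    simpa using (max_le_iff.1 hwi.1).1
  · have hwi := hw i
    rw [hWU i] at hwi
    simpa using hwi.2
  · rintro _ ⟨a, ha, rfl⟩
    have hmem : ∑ i, l i • (L (a i) + (w i - L (P (w i)))) ∈ closedBall z r := by
      refine hsub ⟨_, fun i => ?_, rfl⟩
      have hwi := hw i
      rw [hWU i, mem_inter_iff, mem_closedBall_zero_iff, hnorm] at hwi
      rw [hWU i]
      refine ⟨?_, (ha i).2⟩
      rw [mem_closedBall_zero_iff, hnorm]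
      refine max_le ?_ ?_
      · simpa [hPL] using (ha i).1
      · simpa [hPL] using (max_le_iff.1 hwi.1).2
    rw [mem_closedBall, dist_eq_norm, hnorm] at hmem
    rw [mem_closedBall, dist_eq_norm]
    simpa [hPL] using (max_le_iff.1 hmem).1

/-- A point of an M-summand of `Z` covering a combination within radius `r` covers, as a point
of `Z`, a combination within radius `max r 1`. -/
lemma CoversCombo.of_summand (hPL : ∀ a, P (L a) = a)
    (hnorm : ∀ z, ‖z‖ = max ‖P z‖ ‖z - L (P z)‖) {x : E} {r : ℝ} (h : CoversCombo x r) :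
    CoversCombo (L x) (max r 1) := by
  have hL : ∀ a, ‖L a‖ = ‖a‖ := fun a => by simp [hnorm (L a), hPL]
  obtain ⟨n, l, W, hl, hsum, hW, hsub⟩ := h
  choose hne U hU hWU using hW
  choose w hw using hne
  refine ⟨n, l, fun i => closedBall 0 1 ∩ {z | P z + 0 ∈ U i}, hl, hsum,
    fun i => ⟨⟨L (w i), ?_, ?_⟩, _, (hU i).preimage_affine P 0, rfl⟩, ?_⟩
  · have hwi := hw i
    rw [hWU i] at hwi
    simpa [hL] using hwi.1
  · have hwi := hw i
    rw [hWU i] at hwi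
    simpa [hPL] using hwi.2
  · rintro _ ⟨v, hv, rfl⟩
    have hmem : ∑ i, l i • P (v i) ∈ closedBall x r := by
      refine hsub ⟨_, fun i => ?_, rfl⟩
      have hvi := (hv i).1
      rw [mem_closedBall_zero_iff, hnorm] at hvi
      rw [hWU i]
      exact ⟨by simpa using (max_le_iff.1 hvi).1, by simpa using (hv i).2⟩
    have hball : ∑ i, l i • v i ∈ closedBall (0 : Z) 1 :=
      (convex_closedBall 0 1).sum_mem (fun i _ => hl i) hsum fun i _ => (hv i).1
    rw [mem_closedBall_zero_iff, hnorm] at hball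
    rw [mem_closedBall, dist_eq_norm] at hmem ⊢
    rw [hnorm]
    refine max_le_max ?_ ?_
    · simpa [hPL] using hmem
    · have hcancel : ∀ v : Z, v - L x - L (P (v - L x)) = v - L (P v) := fun v => by
        simp [hPL]
      rw [hcancel]
      exact (max_le_iff.1 hball).2

lemma Tcc_le_of_summand [Nontrivial E] (hPL : ∀ a, P (L a) = a)
    (hnorm : ∀ z, ‖z‖ = max ‖P z‖ ‖z - L (P z)‖) (hZ : 1 < Tcc Z) : Tcc Z ≤ Tcc E := by
  refine le_Tcc fun r x hr hx h => ?_
  have hLx : ‖L x‖ = 1 := by simp [hnorm (L x), hPL, hx]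
  have hle := Tcc_le (lt_max_of_lt_left hr) hLx (h.of_summand hPL hnorm)
  exact (le_max_iff.1 hle).resolve_right hZ.not_ge

end

theorem stmt_15 (X Y : Type*) [NormedAddCommGroup X] [NormedSpace ℝ X]
    [CompleteSpace X] [Nontrivial X] [NormedAddCommGroup Y] [NormedSpace ℝ Y]
    [CompleteSpace Y] [Nontrivial Y] :
    min (Tcc X) (Tcc Y) ≤ Tcc (WithLp ⊤ (X × Y)) ∧
      (1 < Tcc (WithLp ⊤ (X × Y)) → Tcc (WithLp ⊤ (X × Y)) = min (Tcc X) (Tcc Y)) := by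
  let e := WithLp.prodContinuousLinearEquiv ⊤ ℝ X Y
  let LX : X →L[ℝ] WithLp ⊤ (X × Y) := e.symm.toContinuousLinearMap.comp (.inl ℝ X Y)
  let LY : Y →L[ℝ] WithLp ⊤ (X × Y) := e.symm.toContinuousLinearMap.comp (.inr ℝ X Y)
  let PX : WithLp ⊤ (X × Y) →L[ℝ] X := (ContinuousLinearMap.fst ℝ X Y).comp e.toContinuousLinearMap
  let PY : WithLp ⊤ (X × Y) →L[ℝ] Y := (ContinuousLinearMap.snd ℝ X Y).comp e.toContinuousLinearMap
  have hX : ∀ a, PX (LX a) = a := fun a => by simp [PX, LX]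
  have hY : ∀ a, PY (LY a) = a := fun a => by simp [PY, LY]
  have hmax : ∀ z, ‖z‖ = max ‖PX z‖ ‖PY z‖ := fun z => WithLp.prod_norm_eq_sup z
  have hnX : ∀ z, ‖z‖ = max ‖PX z‖ ‖z - LX (PX z)‖ := fun z => by
    rw [hmax (z - LX (PX z)), hmax z]
    simp [PX, PY, LX]
  have hnY : ∀ z, ‖z‖ = max ‖PY z‖ ‖z - LY (PY z)‖ := fun z => by
    rw [hmax (z - LY (PY z)), hmax z, max_comm]
    simp [PX, PY, LY]
  have : Nontrivial (WithLp ⊤ (X × Y)) := e.toEquiv.nontrivial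
  have hle : min (Tcc X) (Tcc Y) ≤ Tcc (WithLp ⊤ (X × Y)) := by
    refine le_Tcc fun r z hr hz h => ?_
    rw [hmax] at hz
    rcases max_choice ‖PX z‖ ‖PY z‖ with hc | hc
    · exact min_le_of_left_le (Tcc_le hr (hc.symm.trans hz) (h.map_of_summand hX hnX))
    · exact min_le_of_right_le (Tcc_le hr (hc.symm.trans hz) (h.map_of_summand hY hnY))
  exact ⟨hle, fun h1 => le_antisymm
    (le_min (Tcc_le_of_summand hX hnX h1) (Tcc_le_of_summand hY hnY h1)) hle⟩
end
end

section
/- Let X be a real Banach space. Then for every bounded linear operator T : X → X with ‖T‖ = 1 that is weakly compact, one has ‖T + I‖ ≥ max{𝒯^s(X), 𝒯^s_{w*}(X*)}, where I is the identity operator on X. -/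
open Metric Set

noncomputable section

variable (X : Type*) [NormedAddCommGroup X] [NormedSpace ℝ X]

/-- The weak-star Daugavet index of thickness `𝒯ˢ_{w*}(X*)` of the dual of `X`: the infimum of
all `r > 0` such that some weak-star slice of the closed unit ball of `X*` is contained in a
closed ball of radius `r` centered at a point of the unit sphere of `X*`. -/
def TsWStar : ℝ :=
  sInf {r : ℝ | 0 < r ∧ ∃ g : X →L[ℝ] ℝ, ‖g‖ = 1 ∧ ∃ x : X, ‖x‖ = 1 ∧ ∃ α > (0 : ℝ),
    {f : X →L[ℝ] ℝ | ‖f‖ ≤ 1 ∧ 1 - α < f x} ⊆ closedBall g r}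

section LocallyConvex

variable {E : Type*} [AddCommGroup E] [Module ℝ E] [TopologicalSpace E] [IsTopologicalAddGroup E]
  [ContinuousSMul ℝ E]

lemma isCompact_convexJoin {s t : Set E} (hs : IsCompact s) (ht : IsCompact t) :
    IsCompact (convexJoin ℝ s t) := by
  have h : convexJoin ℝ s t =
      (fun p : ℝ × E × E => (1 - p.1) • p.2.1 + p.1 • p.2.2) '' (Icc 0 1 ×ˢ s ×ˢ t) := by
    ext z
    simp only [mem_convexJoin, segment_eq_image, mem_image, Prod.exists, mem_prod]
    constructor
    · rintro ⟨x, hx, y, hy, θ, hθ, rfl⟩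
      exact ⟨θ, x, y, ⟨hθ, hx, hy⟩, rfl⟩
    · rintro ⟨θ, x, y, ⟨hθ, hx, hy⟩, rfl⟩
      exact ⟨x, hx, y, hy, θ, hθ, rfl⟩
  rw [h]
  exact (isCompact_Icc.prod (hs.prod ht)).image (by fun_prop)

variable [LocallyConvexSpace ℝ E] [T2Space E]

/-- An extreme point of a compact convex set `K` lying outside a closed set `F` also lies outside
some compact convex subset of `K` that contains `K ∩ F`. -/
lemma exists_isCompact_convex_of_mem_extremePoints {K F : Set E} (hK : IsCompact K)
    (hKc : Convex ℝ K) {e : E} (he : e ∈ K.extremePoints ℝ) (hF : IsClosed F) (heF : e ∉ F) :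
    ∃ L ⊆ K, IsCompact L ∧ Convex ℝ L ∧ K ∩ F ⊆ L ∧ e ∉ L := by
  refine (hK.inter_right hF).induction_on
    (p := fun s => ∃ L ⊆ K, IsCompact L ∧ Convex ℝ L ∧ K ∩ s ⊆ L ∧ e ∉ L) ?_ ?_ ?_ ?_ |>.imp ?_
  · exact ⟨∅, by simp, by simp, convex_empty, by simp, by simp⟩
  · rintro s t hst ⟨L, h1, h2, h3, h4, h5⟩
    exact ⟨L, h1, h2, h3, (inter_subset_inter_right _ hst).trans h4, h5⟩
  · rintro s t ⟨L, h1, h2, h3, h4, h5⟩ ⟨M, g1, g2, g3, g4, g5⟩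
    rcases L.eq_empty_or_nonempty with rfl | hL
    · exact ⟨M, g1, g2, g3, by grind, g5⟩
    rcases M.eq_empty_or_nonempty with rfl | hM
    · exact ⟨L, h1, h2, h3, by grind, h5⟩
    refine ⟨convexJoin ℝ L M, convexJoin_subset h1 g1 hKc, isCompact_convexJoin h2 g2,
      h3.convexJoin g3, ?_, ?_⟩
    · rw [inter_union_distrib_left]
      exact union_subset (h4.trans (subset_convexJoin_left hM))
        (g4.trans (subset_convexJoin_right hL))
    · rw [mem_convexJoin]
      rintro ⟨x, hx, y, hy, hxy⟩
      rcases (mem_extremePoints_iff_forall_segment.1 he).2 x (h1 hx) y (g1 hy) hxy with rfl | rfl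
      · exact h5 hx
      · exact g5 hy
  · rintro x ⟨hxK, hxF⟩
    have hxe : x ≠ e := fun h => heF (h ▸ hxF)
    obtain ⟨f, hf⟩ := geometric_hahn_banach_point_point hxe
    obtain ⟨c, hc1, hc2⟩ := exists_between hf
    refine ⟨{y | f y ≤ c}, mem_nhdsWithin_of_mem_nhds ?_, K ∩ {y | f y ≤ c}, inter_subset_left,
      hK.inter_right (isClosed_le f.continuous continuous_const),
      hKc.inter (convex_halfSpace_le f.toLinearMap.isLinear c), subset_rfl, fun h => ?_⟩
    · filter_upwards [(isOpen_lt f.continuous continuous_const).mem_nhds hc1] with y hy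
      exact le_of_lt hy
    · exact absurd h.2 (not_le.2 hc2)
  · rintro L ⟨h1, h2, h3, h4, h5⟩
    exact ⟨h1, h2, h3, by grind, h5⟩

/-- If a compact convex set is covered by countably many closed convex sets, then it is the convex
join of one of them with the complement of a nonempty slice missing `C`. -/
lemma exists_convexJoin_of_countable_cover {ι : Type*} [Countable ι] {K C : Set E} {B : ι → Set E}
    (hK : IsCompact K) (hKc : Convex ℝ K) (hC : IsClosed C) (hCc : Convex ℝ C)
    (hKC : (K ∩ C).Nonempty) (hnKC : ¬ K ⊆ C) (hB : ∀ i, IsClosed (B i))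
    (hBc : ∀ i, Convex ℝ (B i)) (hKB : K ⊆ ⋃ i, B i) :
    ∃ (i : ι) (f : E →L[ℝ] ℝ) (a : ℝ), (∀ x ∈ K ∩ C, f x ≤ a) ∧ (∃ x ∈ K, a < f x) ∧
      K ⊆ convexJoin ℝ (K ∩ {x | f x ≤ a}) (K ∩ B i) := by
  set P := K.extremePoints ℝ
  have hPK : closure P ⊆ K := closure_minimal extremePoints_subset hK.isClosed
  have hcomp : CompactSpace (closure P) :=
    isCompact_iff_compactSpace.1 (hK.of_isClosed_subset isClosed_closure hPK)
  obtain ⟨p, hpP, hpC⟩ : ∃ p ∈ P, p ∉ C := by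
    by_contra! h
    apply hnKC
    rw [← closure_convexHull_extremePoints hK hKc]
    exact closure_minimal (convexHull_min h hCc) hC
  have hdense := dense_iUnion_interior_of_closed (X := closure P)
    (f := fun i => (Subtype.val ⁻¹' B i : Set (closure P)))
    (fun i => (hB i).preimage continuous_subtype_val)
    (by
      ext x
      simpa using mem_iUnion.1 (hKB (hPK x.2)))
  obtain ⟨q, hqC, hq⟩ := hdense.inter_open_nonempty (Subtype.val ⁻¹' Cᶜ)
    (hC.isOpen_compl.preimage continuous_subtype_val) ⟨⟨p, subset_closure hpP⟩, hpC⟩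
  obtain ⟨i, hi⟩ := mem_iUnion.1 hq
  obtain ⟨V, hV, hVi⟩ := isOpen_induced_iff.1
    (isOpen_interior (s := (Subtype.val ⁻¹' B i : Set (closure P))))
  have hqV : (q : E) ∈ V ∩ Cᶜ := by
    rw [← hVi] at hi
    exact ⟨hi, hqC⟩
  have hVB : V ∩ closure P ⊆ B i := by
    rintro x ⟨hxV, hxP⟩
    have : (⟨x, hxP⟩ : closure P) ∈ interior (Subtype.val ⁻¹' B i : Set (closure P)) := by
      rw [← hVi]
      exact hxV
    have hx := interior_subset this
    exact hx
  obtain ⟨e, heVC, heP⟩ := mem_closure_iff.1 q.2 _ (hV.inter hC.isOpen_compl) hqV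
  obtain ⟨L, hLK, hL, hLc, hFL, heL⟩ := exists_isCompact_convex_of_mem_extremePoints hK hKc heP
    (hV.inter hC.isOpen_compl).isClosed_compl (fun h => h heVC)
  obtain ⟨f, a, hfa, hae⟩ := geometric_hahn_banach_closed_point hLc hL.isClosed heL
  have hfa' : ∀ x ∈ K, x ∉ V ∩ Cᶜ → f x ≤ a := fun x hx hxV => (hfa x (hFL ⟨hx, hxV⟩)).le
  have heK : e ∈ K := heP.1
  refine ⟨i, f, a, fun x hx => hfa' x hx.1 fun h => h.2 hx.2, ⟨e, heK, hae⟩, ?_⟩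
  have h1 : IsCompact (K ∩ {x | f x ≤ a}) :=
    hK.inter_right (isClosed_le f.continuous continuous_const)
  have h2 : IsCompact (K ∩ B i) := hK.inter_right (hB i)
  have h1n : (K ∩ {x | f x ≤ a}).Nonempty :=
    hKC.imp fun x hx => ⟨hx.1, hfa' x hx.1 fun h => h.2 hx.2⟩
  have h2n : (K ∩ B i).Nonempty := ⟨e, heK, hVB ⟨heVC.1, subset_closure heP⟩⟩
  conv_lhs => rw [← closure_convexHull_extremePoints hK hKc]
  refine closure_minimal (convexHull_min (fun x hx => ?_) ?_) (isCompact_convexJoin h1 h2).isClosed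
  · by_cases hxV : x ∈ V ∩ Cᶜ
    · exact subset_convexJoin_right h1n ⟨hx.1, hVB ⟨hxV.1, subset_closure hx⟩⟩
    · exact subset_convexJoin_left h2n ⟨hx.1, hfa' x hx.1 hxV⟩
  · exact (hKc.inter (convex_halfSpace_le f.toLinearMap.isLinear a)).convexJoin
      (hKc.inter (hBc i))

end LocallyConvex

section Dentability

variable {Y : Type*} [NormedAddCommGroup Y] [NormedSpace ℝ Y]

lemma isClosed_toWeakSpace_image {C : Set Y} (hC : IsClosed C) (hCc : Convex ℝ C) :
    IsClosed (toWeakSpace ℝ Y '' C) := by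
  rw [← hC.closure_eq, hCc.toWeakSpace_closure ℝ]
  exact isClosed_closure

lemma isClosed_of_isCompact_toWeakSpace_image {K : Set Y}
    (hK : IsCompact (toWeakSpace ℝ Y '' K)) : IsClosed K := by
  have h := hK.isClosed.preimage (toWeakSpaceCLM ℝ Y).continuous
  rwa [show toWeakSpaceCLM ℝ Y ⁻¹' (toWeakSpace ℝ Y '' K) = K from
    preimage_image_eq K (toWeakSpace ℝ Y).injective] at h

lemma exists_countable_mem_closure_convexHull {S : Set Y} {x : Y}
    (hx : x ∈ closure (convexHull ℝ S)) :
    ∃ D ⊆ S, D.Countable ∧ x ∈ closure (convexHull ℝ D) := by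
  obtain ⟨u, hu, hux⟩ := mem_closure_iff_seq_limit.1 hx
  have h : ∀ n, ∃ t : Finset Y, (t : Set Y) ⊆ S ∧ u n ∈ convexHull ℝ (t : Set Y) := by
    intro n
    have hn := hu n
    rw [convexHull_eq_union_convexHull_finite_subsets] at hn
    simpa using hn
  choose t htS htu using h
  refine ⟨⋃ n, (t n : Set Y), iUnion_subset htS,
    countable_iUnion fun n => (t n).countable_toSet,
    mem_closure_iff_seq_limit.2 ⟨u, fun n => ?_, hux⟩⟩
  exact convexHull_mono (subset_iUnion (fun n => (t n : Set Y)) n) (htu n)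

lemma le_of_mem_closure_convexHull {S : Set Y} {f : Y →L[ℝ] ℝ} {b : ℝ} (h : ∀ x ∈ S, f x ≤ b)
    {x : Y} (hx : x ∈ closure (convexHull ℝ S)) : f x ≤ b :=
  closure_minimal (convexHull_min h (convex_halfSpace_le f.toLinearMap.isLinear b))
    (isClosed_le f.continuous continuous_const) hx

lemma exists_slice_subset_closedBall_of_isSeparable {K C : Set Y}
    (hK : IsCompact (toWeakSpace ℝ Y '' K)) (hKc : Convex ℝ K) (hKb : Bornology.IsBounded K)
    (hKs : TopologicalSpace.IsSeparable K) (hC : IsClosed C) (hCc : Convex ℝ C)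
    (hKC : (K ∩ C).Nonempty) (hnKC : ¬ K ⊆ C) {ε : ℝ} (hε : 0 < ε) :
    ∃ (f : Y →L[ℝ] ℝ) (b : ℝ) (c : Y), (∃ x ∈ K, b < f x) ∧
      ∀ x ∈ K, b < f x → x ∉ C ∧ ‖x - c‖ ≤ ε := by
  obtain ⟨c, hc, hKcl⟩ := hKs
  obtain ⟨D, hD⟩ := isBounded_iff.1 hKb
  have := hc.to_subtype
  have : LocallyConvexSpace ℝ (WeakSpace ℝ Y) :=
    WeakBilin.locallyConvexSpace (B := (topDualPairing ℝ Y).flip)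
  have hinj := (toWeakSpace ℝ Y).injective
  obtain ⟨i, g, a, hga, ⟨_, ⟨x₀, hx₀, rfl⟩, hx₀a⟩, hjoin⟩ :=
    exists_convexJoin_of_countable_cover (ι := c)
    (B := fun i => toWeakSpace ℝ Y '' closedBall (i : Y) (ε / 2)) hK
    (hKc.linear_image (toWeakSpace ℝ Y).toLinearMap)
    (isClosed_toWeakSpace_image hC hCc) (hCc.linear_image (toWeakSpace ℝ Y).toLinearMap)
    (by
      rw [← image_inter hinj]
      exact hKC.image _)
    (by rwa [image_subset_image_iff hinj])
    (fun i => isClosed_toWeakSpace_image isClosed_closedBall (convex_closedBall _ _))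
    (fun i => (convex_closedBall _ _).linear_image (toWeakSpace ℝ Y).toLinearMap)
    (by
      rw [← image_iUnion]
      refine image_mono fun x hx => ?_
      obtain ⟨y, hy, hxy⟩ := Metric.mem_closure_iff.1 (hKcl hx) (ε / 2) (half_pos hε)
      exact mem_iUnion.2 ⟨⟨y, hy⟩, mem_closedBall.2 hxy.le⟩)
  obtain ⟨_, ⟨m, hm, rfl⟩, hmax⟩ := hK.exists_isMaxOn ⟨_, mem_image_of_mem _ hx₀⟩
    g.continuous.continuousOn
  let f : Y →L[ℝ] ℝ := g.comp (toWeakSpaceCLM ℝ Y)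
  have hfg : ∀ x, f x = g (toWeakSpace ℝ Y x) := fun _ => rfl
  have hfm : ∀ x ∈ K, f x ≤ f m := fun x hx => hmax (mem_image_of_mem _ hx)
  have ham : a < f m := hx₀a.trans_le (hfm x₀ hx₀)
  have hD0 : 0 ≤ D := dist_nonneg.trans (hD hm hm)
  obtain ⟨r, hr0, hr1, hrD⟩ : ∃ r : ℝ, 0 < r ∧ r < 1 ∧ r * D ≤ ε / 2 := by
    refine ⟨min (1 / 2) (ε / (2 * (D + 1))), by positivity,
      (min_le_left _ _).trans_lt (by norm_num), ?_⟩
    calc min (1 / 2) (ε / (2 * (D + 1))) * D ≤ ε / (2 * (D + 1)) * (D + 1) := by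
          gcongr
          · exact min_le_right _ _
          · linarith
      _ = ε / 2 := by field_simp
  refine ⟨f, r * a + (1 - r) * f m, i, ⟨m, hm, by nlinarith⟩, fun x hx hxf => ⟨fun hxC => ?_, ?_⟩⟩
  · have : f x ≤ a := hga _ ⟨mem_image_of_mem _ hx, mem_image_of_mem _ hxC⟩
    nlinarith
  · obtain ⟨_, ⟨⟨k₁, hk₁, rfl⟩, hfk₁⟩, _, ⟨⟨k₂, hk₂, rfl⟩, hBk₂⟩, s, t, hs, ht, hst, heq⟩ :=
      mem_convexJoin.1 (hjoin (mem_image_of_mem _ hx))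
    have hk₂i : ‖k₂ - i‖ ≤ ε / 2 := by
      rw [hinj.mem_set_image] at hBk₂
      exact mem_closedBall_iff_norm.1 hBk₂
    have heq' : s • k₁ + t • k₂ = x := hinj (by simpa using heq)
    have hfk₁' : f k₁ ≤ a := hfk₁
    have hfx : f x = s * f k₁ + t * f k₂ := by rw [← heq']; simp
    have hfk₂ := hfm k₂ hk₂
    obtain rfl : t = 1 - s := by linarith
    have hsr : s < r := by
      by_contra! h
      nlinarith [mul_le_mul_of_nonneg_left hfk₁' hs, mul_le_mul_of_nonneg_left hfk₂ ht,
        mul_nonneg (sub_nonneg.2 h) (sub_nonneg.2 ham.le)]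
    have hxi : x - i = s • (k₁ - k₂) + (k₂ - i) := by
      rw [← heq']
      module
    have hkD : ‖k₁ - k₂‖ ≤ D := by
      rw [← dist_eq_norm]
      exact hD hk₁ hk₂
    calc ‖x - i‖ ≤ ‖s • (k₁ - k₂)‖ + ‖k₂ - i‖ := hxi ▸ norm_add_le _ _
      _ = s * ‖k₁ - k₂‖ + ‖k₂ - i‖ := by rw [norm_smul, Real.norm_of_nonneg hs]
      _ ≤ r * D + ε / 2 := by gcongr
      _ ≤ ε := by linarith

/-- A weakly compact convex set not contained in a closed convex set `C` has slices of arbitrarily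
small diameter that are disjoint from `C`. -/
lemma exists_slice_subset_closedBall_s16 {K C : Set Y}
    (hK : IsCompact (toWeakSpace ℝ Y '' K)) (hKc : Convex ℝ K) (hKb : Bornology.IsBounded K)
    (hC : IsClosed C) (hCc : Convex ℝ C)
    (hKC : (K ∩ C).Nonempty) (hnKC : ¬ K ⊆ C) {ε : ℝ} (hε : 0 < ε) :
    ∃ y ∈ K, ∃ (f : Y →L[ℝ] ℝ) (b : ℝ), b < f y ∧
      ∀ x ∈ K, b < f x → x ∉ C ∧ ‖x - y‖ ≤ ε := by
  by_contra! H
  have hhull : ∀ x ∈ K, x ∈ closure (convexHull ℝ ((K \ closedBall x ε) ∪ (K ∩ C))) := by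
    intro x hx
    by_contra hxS
    obtain ⟨f, b, hfb, hbx⟩ := geometric_hahn_banach_closed_point (convex_convexHull ℝ _).closure
      isClosed_closure hxS
    obtain ⟨z, hz, hbz, hzx⟩ := H x hx f b hbx
    have hmem : z ∈ (K \ closedBall x ε) ∪ (K ∩ C) := by
      by_cases hzC : z ∈ C
      · exact Or.inr ⟨hz, hzC⟩
      · exact Or.inl ⟨hz, by simpa [dist_eq_norm] using hzx hzC⟩
    exact (hfb z (subset_closure (subset_convexHull ℝ _ hmem))).not_gt hbz
  have hex : ∀ x, ∃ D ⊆ K, D.Countable ∧ (x ∈ K → D ⊆ (K \ closedBall x ε) ∪ (K ∩ C) ∧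
      x ∈ closure (convexHull ℝ D)) := by
    intro x
    by_cases hx : x ∈ K
    · obtain ⟨D, hDS, hDc, hxD⟩ := exists_countable_mem_closure_convexHull (hhull x hx)
      exact ⟨D, hDS.trans (union_subset sdiff_subset inter_subset_left), hDc, fun _ => ⟨hDS, hxD⟩⟩
    · exact ⟨∅, empty_subset _, countable_empty, fun h => absurd h hx⟩
  choose D hDK hDc hD using hex
  obtain ⟨c₀, hc₀K, hc₀C⟩ := hKC
  obtain ⟨x₀, hx₀K, hx₀C⟩ := not_subset.1 hnKC
  let A : ℕ → Set Y := fun n => Nat.rec {x₀, c₀} (fun _ s => s ∪ ⋃ x ∈ s, D x) n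
  have hA : ∀ n, A (n + 1) = A n ∪ ⋃ x ∈ A n, D x := fun _ => rfl
  have hA0 : A 0 = {x₀, c₀} := rfl
  have hAc : ∀ n, (A n).Countable ∧ A n ⊆ K := by
    intro n
    induction n with
    | zero => exact ⟨by simp [hA0], by rw [hA0]; grind⟩
    | succ n ih =>
      rw [hA]
      exact ⟨ih.1.union (ih.1.biUnion fun x _ => hDc x),
        union_subset ih.2 (iUnion₂_subset fun x _ => hDK x)⟩
  have hAD : ∀ x ∈ ⋃ n, A n, D x ⊆ ⋃ n, A n := by
    intro x hx
    obtain ⟨n, hn⟩ := mem_iUnion.1 hx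
    refine Subset.trans ?_ (subset_iUnion A (n + 1))
    rw [hA]
    exact (subset_biUnion_of_mem (u := D) hn).trans subset_union_right
  have hAK : ⋃ n, A n ⊆ K := iUnion_subset fun n => (hAc n).2
  have hKcl : IsClosed K := isClosed_of_isCompact_toWeakSpace_image hK
  set K' := closure (convexHull ℝ (⋃ n, A n))
  have hK'K : K' ⊆ K := closure_minimal (convexHull_min hAK hKc) hKcl
  have hAK' : ⋃ n, A n ⊆ K' := (subset_convexHull ℝ _).trans subset_closure
  have hK'c : Convex ℝ K' := (convex_convexHull ℝ _).closure
  obtain ⟨f, b, c, ⟨x₁, hx₁, hbx₁⟩, hslice⟩ := exists_slice_subset_closedBall_of_isSeparable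
    (K := K') (C := C) (hK.of_isClosed_subset (isClosed_toWeakSpace_image isClosed_closure hK'c)
      (image_mono hK'K)) hK'c (hKb.subset hK'K)
    ((countable_iUnion fun n => (hAc n).1).isSeparable.span (R := ℝ) |>.closure.mono
      (closure_mono (convexHull_min Submodule.subset_span (Submodule.convex _)))) hC hCc
    ⟨c₀, hAK' (mem_iUnion.2 ⟨0, by simp [hA0]⟩), hc₀C⟩
    (fun h => hx₀C (h (hAK' (mem_iUnion.2 ⟨0, by simp [hA0]⟩)))) (half_pos hε)
  obtain ⟨y, hyA, hby⟩ : ∃ y ∈ ⋃ n, A n, b < f y := by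
    by_contra! h
    exact (le_of_mem_closure_convexHull h hx₁).not_gt hbx₁
  obtain ⟨hDy, hyD⟩ := hD y (hAK hyA)
  refine (le_of_mem_closure_convexHull (fun z hz => ?_) hyD).not_gt hby
  by_contra! hbz
  obtain ⟨hzC, hzc⟩ := hslice z (hAK' (hAD y hyA hz)) hbz
  have hyc := (hslice y (hAK' hyA) hby).2
  rcases hDy hz with h | h
  · apply h.2
    rw [mem_closedBall, dist_eq_norm]
    calc ‖z - y‖ = ‖(z - c) - (y - c)‖ := by congr 1; abel
      _ ≤ ‖z - c‖ + ‖y - c‖ := norm_sub_le _ _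
      _ ≤ ε := by linarith
  · exact hzC h.2

end Dentability

section WeaklyCompactOperator

set_option maxSynthPendingDepth 3

variable {Y : Type*} [NormedAddCommGroup Y] [NormedSpace ℝ Y]

lemma exists_slice_subset_closedBall_norm_add_id {S : Y →L[ℝ] Y} (hS : ‖S‖ = 1)
    (hwc : IsCompact (closure (toWeakSpace ℝ Y '' (S '' closedBall (0 : Y) 1)))) {ε : ℝ}
    (hε : 0 < ε) :
    ∃ (y : Y) (f : Y →L[ℝ] ℝ) (b : ℝ), ‖y‖ = 1 ∧ 0 ≤ b ∧ (∃ x, ‖x‖ ≤ 1 ∧ b < f (S x)) ∧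
      ∀ x, ‖x‖ ≤ 1 → b < f (S x) → ‖x - y‖ ≤ ‖S + ContinuousLinearMap.id ℝ Y‖ + ε := by
  wlog hε1 : ε < 1 generalizing ε
  · obtain ⟨y, f, b, hy, hb, hx, h⟩ := this (ε := 1 / 2) (by norm_num) (by norm_num)
    exact ⟨y, f, b, hy, hb, hx, fun x hx hbx => (h x hx hbx).trans (by linarith)⟩
  have hconv : Convex ℝ (S '' closedBall (0 : Y) 1) :=
    (convex_closedBall _ _).linear_image S.toLinearMap
  rw [← hconv.toWeakSpace_closure ℝ] at hwc
  set K := closure (S '' closedBall (0 : Y) 1)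
  have hSK : ∀ x, ‖x‖ ≤ 1 → S x ∈ K := fun x hx =>
    subset_closure (mem_image_of_mem _ (by simpa using hx))
  have hK1 : K ⊆ closedBall 0 1 := by
    refine closure_minimal ?_ isClosed_closedBall
    rintro _ ⟨x, hx, rfl⟩
    simpa [hS] using S.le_of_opNorm_le_of_le hS.le (mem_closedBall_zero_iff.1 hx)
  have h0K : (0 : Y) ∈ K := by simpa using hSK 0 (by simp)
  have h0C : (0 : Y) ∈ closedBall (0 : Y) (1 - ε / 2) := by
    simp
    linarith
  obtain ⟨y, hyK, f, b, hby, hslice⟩ := exists_slice_subset_closedBall_s16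
    (K := K) (C := closedBall 0 (1 - ε / 2)) hwc hconv.closure
    (isBounded_closedBall.subset hK1) isClosed_closedBall (convex_closedBall _ _)
    ⟨0, h0K, h0C⟩ (fun h => by
      obtain ⟨x, hx, hxS⟩ := S.exists_lt_apply_of_lt_opNorm (r := 1 - ε / 2) (by linarith)
      exact hxS.not_ge (by simpa using h (hSK x hx.le))) (half_pos hε)
  have hy1 : ‖y‖ ≤ 1 := by simpa using hK1 hyK
  have hyε : 1 - ε / 2 < ‖y‖ := by simpa using (hslice y hyK hby).1
  have hy0 : 0 < ‖y‖ := by linarith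
  refine ⟨-(‖y‖⁻¹ • y), f, b, ?_, ?_, ?_, fun x hx hbx => ?_⟩
  · rw [norm_neg, norm_smul, norm_inv, norm_norm, inv_mul_cancel₀ hy0.ne']
  · by_contra! hb
    exact (hslice 0 h0K (by simpa using hb)).1 h0C
  · obtain ⟨_, hbx, x, hx, rfl⟩ := mem_closure_iff.1 hyK _
      (isOpen_lt continuous_const f.continuous) hby
    exact ⟨x, by simpa using hx, hbx⟩
  · have hSxy := (hslice (S x) (hSK x hx) hbx).2
    have hxS : ‖S x + x‖ ≤ ‖S + ContinuousLinearMap.id ℝ Y‖ := by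
      simpa using (S + ContinuousLinearMap.id ℝ Y).le_of_opNorm_le_of_le le_rfl hx
    have hnorm : ‖‖y‖⁻¹ • y - y‖ ≤ ε / 2 := by
      have h : ‖y‖⁻¹ • y - y = (‖y‖⁻¹ - 1) • y := by module
      have h1 : 0 ≤ ‖y‖⁻¹ - 1 := sub_nonneg.2 ((one_le_inv₀ hy0).2 hy1)
      rw [h, norm_smul, Real.norm_of_nonneg h1, sub_mul, inv_mul_cancel₀ hy0.ne']
      linarith
    calc ‖x - -(‖y‖⁻¹ • y)‖ = ‖(S x + x) - (S x - y) + (‖y‖⁻¹ • y - y)‖ := by congr 1; abel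
      _ ≤ ‖S x + x‖ + ‖S x - y‖ + ‖‖y‖⁻¹ • y - y‖ :=
        (norm_add_le _ _).trans (by gcongr; exact norm_sub_le _ _)
      _ ≤ ‖S + ContinuousLinearMap.id ℝ Y‖ + ε := by linarith

/-- The second adjoint of a weakly compact operator takes values in the original space. -/
lemma exists_apply_comp_eq_of_weaklyCompact {S : Y →L[ℝ] Y}
    (hwc : IsCompact (closure (toWeakSpace ℝ Y '' (S '' closedBall (0 : Y) 1))))
    (F : StrongDual ℝ (StrongDual ℝ Y)) : ∃ z : Y, ∀ f : StrongDual ℝ Y, F (f.comp S) = f z := by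
  wlog hF : ‖F‖ ≤ 1 generalizing F
  · have hF0 : ‖F‖ ≠ 0 := fun h => hF (by rw [h]; exact zero_le_one)
    obtain ⟨z, hz⟩ := this (‖F‖⁻¹ • F) (by rw [norm_smul, norm_inv, norm_norm, inv_mul_cancel₀ hF0])
    refine ⟨‖F‖ • z, fun f => ?_⟩
    rw [map_smul, ← hz]
    simp [hF0]
  have : LocallyConvexSpace ℝ (WeakDual ℝ (StrongDual ℝ Y)) :=
    WeakBilin.locallyConvexSpace (B := topDualPairing ℝ (StrongDual ℝ Y))
  let J := NormedSpace.inclusionInDoubleDualWeak ℝ Y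
  let φ : WeakDual ℝ (StrongDual ℝ Y) :=
    StrongDual.toWeakDual (F.comp (ContinuousLinearMap.precomp ℝ S))
  have hconv : Convex ℝ (toWeakSpace ℝ Y '' (S '' closedBall (0 : Y) 1)) :=
    ((convex_closedBall _ _).linear_image S.toLinearMap).linear_image (toWeakSpace ℝ Y).toLinearMap
  by_cases hφ : φ ∈ J '' closure (toWeakSpace ℝ Y '' (S '' closedBall (0 : Y) 1))
  · obtain ⟨w, -, hw⟩ := hφ
    obtain ⟨z, rfl⟩ := (toWeakSpace ℝ Y).surjective w
    exact ⟨z, fun f => (DFunLike.congr_fun hw f).symm⟩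
  · exfalso
    obtain ⟨L, u, hLu, huL⟩ := geometric_hahn_banach_closed_point
      (hconv.closure.linear_image J.toLinearMap) (hwc.image J.continuous).isClosed hφ
    obtain ⟨f, hf⟩ := LinearMap.dualEmbedding_surjective (topDualPairing ℝ (StrongDual ℝ Y)) L
    have hLf : ∀ ψ : WeakDual ℝ (StrongDual ℝ Y), L ψ = ψ f := fun ψ => by rw [← hf]; rfl
    have hfu : ∀ x, ‖x‖ ≤ 1 → f (S x) < u := by
      intro x hx
      have h := hLu (J (toWeakSpace ℝ Y (S x))) (mem_image_of_mem _ (subset_closure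
        (mem_image_of_mem _ (mem_image_of_mem _ (by simpa using hx)))))
      rw [hLf] at h
      exact h
    have hu : 0 ≤ u := by simpa using (hfu 0 (by simp)).le
    have hnorm : ‖f.comp S‖ ≤ u := by
      refine ContinuousLinearMap.opNorm_le_of_unit_norm hu fun x hx =>
        abs_le.2 ⟨?_, (hfu x hx.le).le⟩
      have := hfu (-x) (by rw [norm_neg, hx])
      simp only [map_neg] at this
      rw [ContinuousLinearMap.comp_apply]
      linarith
    have huF : u < F (f.comp S) := by
      rw [hLf] at huL
      exact huL
    have := (le_abs_self _).trans (F.le_of_opNorm_le hF (f.comp S))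
    linarith

lemma norm_precomp_eq (S : Y →L[ℝ] Y) :
    ‖(ContinuousLinearMap.precomp ℝ S : StrongDual ℝ Y →L[ℝ] StrongDual ℝ Y)‖ = ‖S‖ := by
  refine le_antisymm (ContinuousLinearMap.opNorm_le_bound _ (norm_nonneg _) fun f => ?_)
    (ContinuousLinearMap.opNorm_le_bound _ (norm_nonneg _) fun x => ?_)
  · rw [mul_comm]
    exact f.opNorm_comp_le S
  · obtain ⟨g, hg, hgx⟩ := exists_dual_vector'' ℝ (S x)
    let R : StrongDual ℝ Y →L[ℝ] StrongDual ℝ Y := ContinuousLinearMap.precomp ℝ S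
    have h : ‖R g‖ ≤ ‖R‖ := by simpa using R.le_of_opNorm_le_of_le le_rfl hg
    calc ‖S x‖ = R g x := hgx.symm
      _ ≤ ‖R g‖ * ‖x‖ := (le_abs_self _).trans ((R g).le_opNorm x)
      _ ≤ ‖R‖ * ‖x‖ := by gcongr

lemma norm_precomp_add_id_eq (S : Y →L[ℝ] Y) :
    ‖(ContinuousLinearMap.precomp ℝ S : StrongDual ℝ Y →L[ℝ] StrongDual ℝ Y) +
      ContinuousLinearMap.id ℝ (StrongDual ℝ Y)‖ = ‖S + ContinuousLinearMap.id ℝ Y‖ := by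
  rw [← norm_precomp_eq (S + ContinuousLinearMap.id ℝ Y)]
  congr 1
  ext f x
  simp

/-- The adjoint of a weakly compact operator is weakly compact. -/
lemma isCompact_closure_precomp_of_weaklyCompact {S : Y →L[ℝ] Y}
    (hwc : IsCompact (closure (toWeakSpace ℝ Y '' (S '' closedBall (0 : Y) 1)))) :
    IsCompact (closure (toWeakSpace ℝ (StrongDual ℝ Y) ''
      ((ContinuousLinearMap.precomp ℝ S : StrongDual ℝ Y →L[ℝ] StrongDual ℝ Y) ''
        closedBall 0 1))) := by
  let Φ : WeakDual ℝ Y → WeakSpace ℝ (StrongDual ℝ Y) := fun φ =>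
    toWeakSpace ℝ (StrongDual ℝ Y) (ContinuousLinearMap.precomp ℝ S (WeakDual.toStrongDual φ))
  have hΦ : Continuous Φ := by
    refine WeakBilin.continuous_of_continuous_eval _ fun F => ?_
    obtain ⟨z, hz⟩ := exists_apply_comp_eq_of_weaklyCompact hwc F
    exact (WeakDual.eval_continuous z).congr fun φ => (hz (WeakDual.toStrongDual φ)).symm
  have h := (WeakDual.isCompact_closedBall (0 : StrongDual ℝ Y) 1).image hΦ
  have heq : Φ '' (WeakDual.toStrongDual ⁻¹' closedBall (0 : StrongDual ℝ Y) 1) =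
      toWeakSpace ℝ (StrongDual ℝ Y) ''
      ((ContinuousLinearMap.precomp ℝ S : StrongDual ℝ Y →L[ℝ] StrongDual ℝ Y) ''
        closedBall 0 1) := by
    rw [image_image]
    rfl
  rw [heq] at h
  rwa [h.isClosed.closure_eq]

end WeaklyCompactOperator

theorem stmt_16 (X : Type*) [NormedAddCommGroup X] [NormedSpace ℝ X] [CompleteSpace X]
    [Nontrivial X] (T : X →L[ℝ] X) (hT : ‖T‖ = 1)
    (hwc : IsCompact (closure (toWeakSpace ℝ X '' (T '' closedBall (0 : X) 1)))) :
    max (Ts X) (TsWStar X) ≤ ‖T + ContinuousLinearMap.id ℝ X‖ := by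
  refine max_le (le_of_forall_pos_le_add fun ε hε => ?_) (le_of_forall_pos_le_add fun ε hε => ?_)
  · obtain ⟨y, f, b, hy, hb, ⟨x, hx, hbx⟩, h⟩ :=
      exists_slice_subset_closedBall_norm_add_id hT hwc hε
    have hlt : b < ‖f.comp T‖ :=
      hbx.trans_le ((le_abs_self _).trans (by
        simpa using (f.comp T).le_of_opNorm_le_of_le le_rfl hx))
    have hpos : 0 < ‖f.comp T‖ := hb.trans_lt hlt
    refine csInf_le ⟨0, fun r hr => hr.1.le⟩ ⟨by positivity, y, hy, _,
      ⟨‖f.comp T‖⁻¹ • f.comp T, ?_, 1 - b / ‖f.comp T‖, ?_, rfl⟩, ?_⟩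
    · rw [norm_smul, norm_inv, norm_norm, inv_mul_cancel₀ hpos.ne']
    · exact sub_pos.2 ((div_lt_one hpos).2 hlt)
    · rintro z ⟨hz, hbz⟩
      rw [mem_closedBall_iff_norm]
      refine h z (by simpa using hz) ?_
      rwa [sub_sub_cancel, smul_apply, smul_eq_mul, ← div_eq_inv_mul,
        div_lt_div_iff_of_pos_right hpos] at hbz
  · obtain ⟨g, F, b, hg, hb, ⟨f, hf, hbf⟩, h⟩ := exists_slice_subset_closedBall_norm_add_id
      ((norm_precomp_eq T).trans hT) (isCompact_closure_precomp_of_weaklyCompact hwc) hε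
    obtain ⟨z, hz⟩ := exists_apply_comp_eq_of_weaklyCompact hwc F
    have hz' : ∀ f : StrongDual ℝ X, F (ContinuousLinearMap.precomp ℝ T f) = f z := hz
    rw [hz'] at hbf
    have hlt : b < ‖z‖ :=
      hbf.trans_le ((le_abs_self _).trans (by simpa using f.le_of_opNorm_le hf z))
    have hpos : 0 < ‖z‖ := hb.trans_lt hlt
    rw [norm_precomp_add_id_eq] at h
    refine csInf_le ⟨0, fun r hr => hr.1.le⟩ ⟨by positivity, g, hg, ‖z‖⁻¹ • z, ?_,
      1 - b / ‖z‖, sub_pos.2 ((div_lt_one hpos).2 hlt), ?_⟩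
    · rw [norm_smul, norm_inv, norm_norm, inv_mul_cancel₀ hpos.ne']
    · rintro k ⟨hk, hbk⟩
      rw [mem_closedBall_iff_norm]
      refine h k hk ?_
      rw [hz']
      rwa [sub_sub_cancel, map_smul, smul_eq_mul, ← div_eq_inv_mul,
        div_lt_div_iff_of_pos_right hpos] at hbk
end
end
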